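/- arXiv:1808.09631 — 3 statements merged into one kernel-verified Lean document; each statement's English description precedes it below -/
import Mathlib

section
/- Let a < b, α ∈ (0,1], and let f : [a,b]×[a,b] → ℝ be C¹ with α-Hölder first partial derivatives (f ∈ C^{1+α}). Define (Hf)(x) := p.f.∫_x^b f(x,t)/(t−x) dt and h(x) := p.f.∫_x^b f(x,t)/(t−x)² dt + p.f.∫_x^b (∂f/∂x)(x,t)/(t−x) dt − (∂f/∂t)(x,x), for x ∈ (a,b). Assume that the three functions F₁(x) = f(x,x)/(b−x), F₂(x) = log(b−x)·(∂f/∂t)(x,x), F₃(x) = log(b−x)·(∂f/∂x)(x,x) are integrable on (a,b). Then Hf and h are integrable on (a,b) and for every φ ∈ C_0^∞((a,b)) one has ∫_a^b (Hf)(x) φ'(x) dx = − ∫_a^b h(x) φ(x) dx; i.e. Hf lies in W^{1,1}((a,b)) with weak derivative h. -/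
/-
Subtracting the constant `g x` turns the order-one finite part into an absolutely convergent
integral: it equals `∫_x^b (g t - g x) / (t - x) dt + g x * log (b - x)`, and integration by parts
reduces the order-two finite part of `g` to the order-one finite part of `g'`. Rescaling `[x, b]` to
`[0, 1]` fixes both the domain and the singularity at `s = 0`, and the Hölder bound dominates the
integrand by a multiple of `s ^ (β - 1)`, so `Hf` may be differentiated under the integral sign on
the open interval. There `h` is its classical derivative, and both functions being integrable, an
integration by parts against test functions gives the weak derivative.
-/

open MeasureTheory Filter Set
open scoped Topology

noncomputable section

/-- Hadamard finite part of order 1 with upper limit `b`. -/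
def HasPF1Upper (g : ℝ → ℝ) (x b L : ℝ) : Prop :=
  Tendsto (fun ε : ℝ => (∫ t in (x + ε)..b, g t / (t - x)) + g x * Real.log ε)
    (𝓝[>] (0 : ℝ)) (𝓝 L)

/-- Hadamard finite part of order 2 with upper limit `b`, `d` being the right derivative
`g'(x⁺)`. -/
def HasPF2Upper (g : ℝ → ℝ) (d x b L : ℝ) : Prop :=
  Tendsto (fun ε : ℝ => (∫ t in (x + ε)..b, g t / (t - x) ^ 2) + d * Real.log ε - g x / ε)
    (𝓝[>] (0 : ℝ)) (𝓝 L)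

/-- The closed form of the order-one finite part at upper limit `b`: the constant `g x` has finite
part `g x * log (b - x)`, and the remainder is an ordinary integral whenever `slope g x` is
integrable. -/
def finitePart (g : ℝ → ℝ) (x b : ℝ) : ℝ :=
  (∫ t in x..b, slope g x t) + g x * Real.log (b - x)

/-- The function `G x` read along the segment from `x` to `b`, parametrized by `[0, 1]` so that
integrals over `[x, b]` become integrals over an interval independent of `x`. -/
def alongSegment (G : ℝ → ℝ → ℝ) (b x s : ℝ) : ℝ :=
  G x (x + (b - x) * s)

/-- The sections `G x` are Hölder of exponent `β` at the diagonal point `t = x`, on its right and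
with a constant `C` independent of `x`: this controls `slope (G x) x` near its singularity. -/
def HolderAtDiagonal (C β : ℝ) (G : ℝ → ℝ → ℝ) (a b : ℝ) : Prop :=
  ∀ x ∈ Icc a b, ∀ t ∈ Icc x b, |G x t - G x x| ≤ C * (t - x) ^ β

/-- `f` is of class `C¹` on the square `[a, b]²` with first partial derivatives `fx` and `ft`, which
are one-sided on the boundary. -/
structure HasContPartialsOnSquare (f fx ft : ℝ → ℝ → ℝ) (a b : ℝ) : Prop where
  continuousOn : ContinuousOn (Function.uncurry f) (Icc a b ×ˢ Icc a b)
  hasDerivWithinAt_fst : ∀ x ∈ Icc a b, ∀ t ∈ Icc a b,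
    HasDerivWithinAt (fun y => f y t) (fx x t) (Icc a b) x
  hasDerivWithinAt_snd : ∀ x ∈ Icc a b, ∀ t ∈ Icc a b,
    HasDerivWithinAt (fun s => f x s) (ft x t) (Icc a b) t
  continuousOn_fst : ContinuousOn (Function.uncurry fx) (Icc a b ×ˢ Icc a b)
  continuousOn_snd : ContinuousOn (Function.uncurry ft) (Icc a b ×ˢ Icc a b)

section FinitePart

variable {g g' : ℝ → ℝ} {x y b C β L : ℝ}

lemma tendsto_const_add_nhdsGT (x : ℝ) : Tendsto (fun ε => x + ε) (𝓝[>] 0) (𝓝[>] x) := by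
  have hmaps : MapsTo (fun ε => x + ε) (Ioi 0) (Ioi x) := fun _ hε => lt_add_of_pos_right x hε
  have hcont : ContinuousWithinAt (fun ε => x + ε) (Ioi 0) 0 :=
    (continuous_const_add x).continuousWithinAt
  simpa only [add_zero] using hcont.tendsto_nhdsWithin hmaps

lemma tendsto_slope_zero_right_of_hasDerivWithinAt {d : ℝ} (hg : HasDerivWithinAt g d (Ioi x) x) :
    Tendsto (fun ε => (g (x + ε) - g x) / ε) (𝓝[>] 0) (𝓝 d) := by
  have hslope := ((hasDerivWithinAt_iff_tendsto_slope' self_notMem_Ioi).1 hg).comp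
    (tendsto_const_add_nhdsGT x)
  simpa only [Function.comp_def, slope_def_field, add_sub_cancel_left] using hslope

lemma tendsto_integral_add_nhdsGT (hxb : x < b) (hg : IntervalIntegrable g volume x b) :
    Tendsto (fun ε => ∫ t in (x + ε)..b, g t) (𝓝[>] 0) (𝓝 (∫ t in x..b, g t)) := by
  have hprim : ContinuousOn (fun y => ∫ t in y..b, g t) (Icc x b) := by
    rw [← uIcc_of_le hxb.le]
    refine intervalIntegral.continuousOn_primitive_interval_left ?_
    rwa [uIcc_of_le hxb.le, ← intervalIntegrable_iff_integrableOn_Icc_of_le hxb.le]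
  exact (hprim x (left_mem_Icc.2 hxb.le)).tendsto.comp
    ((tendsto_const_add_nhdsGT x).mono_right (nhdsWithin_le_of_mem (Icc_mem_nhdsGT hxb)))

lemma integral_inv_sub_of_lt (hxy : x < y) (hyb : y ≤ b) :
    ∫ t in y..b, (t - x)⁻¹ = Real.log (b - x) - Real.log (y - x) := by
  have hy := sub_pos.2 hxy
  have hb := sub_pos.2 (hxy.trans_le hyb)
  rw [intervalIntegral.integral_comp_sub_right (fun t => t⁻¹), integral_inv_of_pos hy hb,
    Real.log_div hb.ne' hy.ne']

lemma continuousOn_inv_sub_of_lt (hxy : x < y) : ContinuousOn (fun t => (t - x)⁻¹) (Icc y b) :=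
  ContinuousOn.inv₀ (by fun_prop) fun _ ht => (sub_pos.2 (hxy.trans_le ht.1)).ne'

lemma integral_div_sub_eq_integral_slope_add (hxy : x < y) (hyb : y ≤ b)
    (hg : IntervalIntegrable (slope g x) volume y b) :
    ∫ t in y..b, g t / (t - x)
      = (∫ t in y..b, slope g x t) + g x * (Real.log (b - x) - Real.log (y - x)) := by
  have hinv : IntervalIntegrable (fun t => (t - x)⁻¹) volume y b :=
    (continuousOn_inv_sub_of_lt hxy).intervalIntegrable_of_Icc hyb
  rw [← integral_inv_sub_of_lt hxy hyb, ← intervalIntegral.integral_const_mul,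
    ← intervalIntegral.integral_add hg (hinv.const_mul _)]
  congr 1 with t
  rw [slope_def_field]
  ring

lemma hasPF1Upper_finitePart (hxb : x < b) (hg : IntervalIntegrable (slope g x) volume x b) :
    HasPF1Upper g x b (finitePart g x b) := by
  refine ((tendsto_integral_add_nhdsGT hxb hg).add_const _).congr' ?_
  filter_upwards [Ioo_mem_nhdsGT (sub_pos.2 hxb)] with ε hε
  have hlt : x < x + ε := lt_add_of_pos_right x hε.1
  have hle : x + ε ≤ b := by linarith [hε.2]
  rw [integral_div_sub_eq_integral_slope_add hlt hle
    (hg.mono_set (uIcc_subset_uIcc_right (by rw [uIcc_of_le hxb.le]; exact ⟨hlt.le, hle⟩))),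
    add_sub_cancel_left]
  ring

lemma integral_div_sub_sq_eq (hxy : x < y) (hyb : y ≤ b)
    (hg : ∀ t ∈ Icc y b, HasDerivWithinAt g (g' t) (Icc y b) t)
    (hg' : ContinuousOn g' (Icc y b)) :
    ∫ t in y..b, g t / (t - x) ^ 2
      = (∫ t in y..b, g' t / (t - x)) + g y / (y - x) - g b / (b - x) := by
  have hne : ∀ t ∈ Icc y b, t - x ≠ 0 := fun t ht => (sub_pos.2 (hxy.trans_le ht.1)).ne'
  have hv : ∀ t ∈ Icc y b,
      HasDerivWithinAt (fun t => -(t - x)⁻¹) (((t - x) ^ 2)⁻¹) (Icc y b) t := fun t ht => by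
    refine (((hasDerivWithinAt_id t _).sub_const x).inv (hne t ht)).neg.congr_deriv ?_
    rw [neg_div, neg_neg, one_div, id]
  have hv' : ContinuousOn (fun t => ((t - x) ^ 2)⁻¹) (Icc y b) :=
    ContinuousOn.inv₀ (by fun_prop) fun t ht => pow_ne_zero 2 (hne t ht)
  have hparts := intervalIntegral.integral_mul_deriv_eq_deriv_mul_of_hasDerivWithinAt
    (by rwa [uIcc_of_le hyb]) (by rwa [uIcc_of_le hyb])
    (hg'.intervalIntegrable_of_Icc hyb) (hv'.intervalIntegrable_of_Icc hyb)
  simp only [mul_neg, intervalIntegral.integral_neg, ← div_eq_mul_inv] at hparts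
  linear_combination hparts

lemma HasPF1Upper.hasPF2Upper (hxb : x < b)
    (hg : ∀ t ∈ Icc x b, HasDerivWithinAt g (g' t) (Icc x b) t)
    (hg' : ContinuousOn g' (Icc x b)) (h : HasPF1Upper g' x b L) :
    HasPF2Upper g (g' x) x b (L - g b / (b - x) + g' x) := by
  have hright : HasDerivWithinAt g (g' x) (Ioi x) x :=
    (hg x (left_mem_Icc.2 hxb.le)).mono_of_mem_nhdsWithin (Icc_mem_nhdsGT hxb)
  refine ((h.sub_const (g b / (b - x))).add
    (tendsto_slope_zero_right_of_hasDerivWithinAt hright)).congr' ?_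
  filter_upwards [Ioo_mem_nhdsGT (sub_pos.2 hxb)] with ε hε
  have hlt : x < x + ε := lt_add_of_pos_right x hε.1
  have hsub : Icc (x + ε) b ⊆ Icc x b := Icc_subset_Icc_left hlt.le
  rw [integral_div_sub_sq_eq hlt (by linarith [hε.2]) (fun t ht => (hg t (hsub ht)).mono hsub)
    (hg'.mono hsub), add_sub_cancel_left]
  ring

lemma continuousOn_slope (hg : ContinuousOn g (Icc x b)) : ContinuousOn (slope g x) (Ioc x b) := by
  rw [slope_fun_def_field]
  exact ((hg.mono Ioc_subset_Icc_self).sub continuousOn_const).div (by fun_prop)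
    fun t ht => (sub_pos.2 ht.1).ne'

lemma aestronglyMeasurable_slope (hxb : x ≤ b) (hg : ContinuousOn g (Icc x b)) :
    AEStronglyMeasurable (slope g x) (volume.restrict (uIoc x b)) := by
  rw [uIoc_of_le hxb]
  exact (continuousOn_slope hg).aestronglyMeasurable measurableSet_Ioc

lemma abs_slope_le_of_abs_sub_le (hxy : x < y) (h : |g y - g x| ≤ C * (y - x) ^ β) :
    |slope g x y| ≤ C * (y - x) ^ (β - 1) := by
  have hpos := sub_pos.2 hxy
  rwa [slope_def_field, abs_div, abs_of_pos hpos, div_le_iff₀ hpos, mul_assoc,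
    ← Real.rpow_add_one hpos.ne', sub_add_cancel]

lemma intervalIntegrable_slope (hxb : x ≤ b) (hβ : 0 < β) (hc : ContinuousOn g (Icc x b))
    (hg : ∀ t ∈ Icc x b, |g t - g x| ≤ C * (t - x) ^ β) :
    IntervalIntegrable (slope g x) volume x b := by
  have hbound : IntervalIntegrable (fun t => C * (t - x) ^ (β - 1)) volume x b := by
    have hpow : IntervalIntegrable (fun s : ℝ => s ^ (β - 1)) volume 0 (b - x) :=
      intervalIntegral.intervalIntegrable_rpow' (by linarith)
    simpa only [zero_add, sub_add_cancel] using (hpow.comp_sub_right x).const_mul C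
  refine hbound.mono_fun' (aestronglyMeasurable_slope hxb hc) ?_
  rw [uIoc_of_le hxb]
  filter_upwards [ae_restrict_mem measurableSet_Ioc] with t ht
  exact abs_slope_le_of_abs_sub_le ht.1 (hg t (Ioc_subset_Icc_self ht))

end FinitePart

section AlongSegment

variable {G : ℝ → ℝ → ℝ} {a b x s C β : ℝ}

lemma add_sub_mul_mem_Icc (hxb : x ≤ b) (hs : s ∈ Icc (0 : ℝ) 1) :
    x + (b - x) * s ∈ Icc x b := by
  have h₀ := mul_nonneg (sub_nonneg.2 hxb) hs.1
  have h₁ := mul_nonneg (sub_nonneg.2 hxb) (sub_nonneg.2 hs.2)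
  constructor <;> linarith

lemma continuousOn_section (hG : ContinuousOn (Function.uncurry G) (Icc a b ×ˢ Icc a b))
    (hx : x ∈ Icc a b) : ContinuousOn (G x) (Icc x b) :=
  (hG.uncurry_left x hx).mono (Icc_subset_Icc_left hx.1)

lemma continuousOn_diagonal (hG : ContinuousOn (Function.uncurry G) (Icc a b ×ˢ Icc a b)) :
    ContinuousOn (fun x => G x x) (Icc a b) :=
  hG.comp (f := fun x => (x, x)) (by fun_prop) fun _ hx => ⟨hx, hx⟩

lemma continuousOn_uncurry_alongSegment
    (hG : ContinuousOn (Function.uncurry G) (Icc a b ×ˢ Icc a b)) :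
    ContinuousOn (Function.uncurry (alongSegment G b)) (Icc a b ×ˢ Icc 0 1) :=
  hG.comp (f := fun p : ℝ × ℝ => (p.1, p.1 + (b - p.1) * p.2)) (by fun_prop) fun _ hp =>
    ⟨hp.1, Icc_subset_Icc_left hp.1.1 (add_sub_mul_mem_Icc hp.1.2 hp.2)⟩

lemma integral_slope_eq_integral_slope_alongSegment (G : ℝ → ℝ → ℝ) (b x : ℝ) :
    ∫ t in x..b, slope (G x) x t = ∫ s in (0 : ℝ)..1, slope (alongSegment G b x) 0 s := by
  have hsub := intervalIntegral.smul_integral_comp_add_mul (a := 0) (b := 1)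
    (slope (G x) x) (b - x) x
  rw [mul_zero, add_zero, mul_one, add_sub_cancel, ← intervalIntegral.integral_smul] at hsub
  rw [← hsub]
  congr 1 with s
  rcases eq_or_ne (b - x) 0 with h | h
  · simp [alongSegment, slope_def_field, h]
  · simp only [alongSegment, slope_def_field, smul_eq_mul, mul_zero, add_zero, sub_zero,
      add_sub_cancel_left]
    field_simp

namespace HolderAtDiagonal

lemma constant_nonneg (hG : HolderAtDiagonal C β G a b) (hab : a < b) : 0 ≤ C :=
  nonneg_of_mul_nonneg_left
    ((abs_nonneg _).trans (hG a (left_mem_Icc.2 hab.le) b (right_mem_Icc.2 hab.le)))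
    (Real.rpow_pos_of_pos (sub_pos.2 hab) β)

lemma abs_alongSegment_sub_le (hG : HolderAtDiagonal C β G a b) (hab : a < b) (hβ : 0 ≤ β)
    (hx : x ∈ Icc a b) (hs : s ∈ Icc (0 : ℝ) 1) :
    |alongSegment G b x s - alongSegment G b x 0| ≤ C * (b - a) ^ β * (s - 0) ^ β := by
  have hC := hG.constant_nonneg hab
  have hbx := sub_nonneg.2 hx.2
  calc |alongSegment G b x s - alongSegment G b x 0|
      = |G x (x + (b - x) * s) - G x x| := by simp only [alongSegment, mul_zero, add_zero]
    _ ≤ C * (x + (b - x) * s - x) ^ β := hG x hx _ (add_sub_mul_mem_Icc hx.2 hs)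
    _ = C * (b - x) ^ β * s ^ β := by rw [add_sub_cancel_left, Real.mul_rpow hbx hs.1, mul_assoc]
    _ ≤ C * (b - a) ^ β * (s - 0) ^ β := by
      rw [sub_zero]
      have := Real.rpow_nonneg hs.1 β
      gcongr
      exact hx.1

lemma abs_slope_alongSegment_le (hG : HolderAtDiagonal C β G a b) (hab : a < b) (hβ : 0 ≤ β)
    (hx : x ∈ Icc a b) (hs : s ∈ Ioc (0 : ℝ) 1) :
    |slope (alongSegment G b x) 0 s| ≤ C * (b - a) ^ β * s ^ (β - 1) := by
  simpa only [sub_zero] using abs_slope_le_of_abs_sub_le hs.1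
    (hG.abs_alongSegment_sub_le hab hβ hx (Ioc_subset_Icc_self hs))

lemma intervalIntegrable_slope (hG : HolderAtDiagonal C β G a b) (hβ : 0 < β)
    (hc : ContinuousOn (Function.uncurry G) (Icc a b ×ˢ Icc a b)) (hx : x ∈ Icc a b) :
    IntervalIntegrable (slope (G x) x) volume x b :=
  _root_.intervalIntegrable_slope hx.2 hβ (continuousOn_section hc hx) (hG x hx)

lemma intervalIntegrable_slope_alongSegment (hG : HolderAtDiagonal C β G a b) (hab : a < b)
    (hβ : 0 < β) (hc : ContinuousOn (Function.uncurry G) (Icc a b ×ˢ Icc a b))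
    (hx : x ∈ Icc a b) : IntervalIntegrable (slope (alongSegment G b x) 0) volume 0 1 :=
  _root_.intervalIntegrable_slope zero_le_one hβ
    ((continuousOn_uncurry_alongSegment hc).uncurry_left x hx)
    fun _ hs => hG.abs_alongSegment_sub_le hab hβ.le hx hs

lemma continuousOn_integral_slope (hG : HolderAtDiagonal C β G a b) (hab : a < b) (hβ : 0 < β)
    (hc : ContinuousOn (Function.uncurry G) (Icc a b ×ˢ Icc a b)) :
    ContinuousOn (fun x => ∫ t in x..b, slope (G x) x t) (Icc a b) := by
  simp only [integral_slope_eq_integral_slope_alongSegment]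
  have hseg := continuousOn_uncurry_alongSegment hc
  intro x₀ hx₀
  refine intervalIntegral.continuousWithinAt_of_dominated_interval
    (bound := fun s => C * (b - a) ^ β * s ^ (β - 1)) ?_ ?_
    ((intervalIntegral.intervalIntegrable_rpow' (by linarith)).const_mul _) ?_
  · filter_upwards [self_mem_nhdsWithin] with x hx
    exact aestronglyMeasurable_slope zero_le_one (hseg.uncurry_left x hx)
  · filter_upwards [self_mem_nhdsWithin] with x hx
    refine ae_of_all _ fun s hs => hG.abs_slope_alongSegment_le hab hβ.le hx ?_
    rwa [uIoc_of_le zero_le_one] at hs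
  · refine ae_of_all _ fun s hs => ?_
    rw [uIoc_of_le zero_le_one] at hs
    simp only [slope_def_field]
    exact ((hseg.uncurry_right s (Ioc_subset_Icc_self hs)).sub
      (hseg.uncurry_right 0 (left_mem_Icc.2 zero_le_one))).div_const _ x₀ hx₀

lemma integrableOn_slope_endpoint (hG : HolderAtDiagonal C 1 G a b)
    (hc : ContinuousOn (Function.uncurry G) (Icc a b ×ˢ Icc a b)) :
    IntegrableOn (fun x => slope (G x) x b) (Ioo a b) := by
  refine IntegrableOn.of_bound measure_Ioo_lt_top ?_ C ?_
  · refine ContinuousOn.aestronglyMeasurable ?_ measurableSet_Ioo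
    simp only [slope_def_field]
    refine ContinuousOn.div ?_ (by fun_prop) fun x hx => (sub_pos.2 hx.2).ne'
    intro x hx
    have hb : b ∈ Icc a b := right_mem_Icc.2 (hx.1.trans hx.2).le
    exact (((hc.uncurry_right b hb).sub (continuousOn_diagonal hc)).mono Ioo_subset_Icc_self) x hx
  · filter_upwards [ae_restrict_mem measurableSet_Ioo] with x hx
    simpa only [sub_self, Real.rpow_zero, mul_one, Real.norm_eq_abs] using
      abs_slope_le_of_abs_sub_le hx.2 (hG x (Ioo_subset_Icc_self hx) b (right_mem_Icc.2 hx.2.le))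

end HolderAtDiagonal

lemma integrableOn_mul_log_sub {u : ℝ → ℝ} (hab : a ≤ b) (hu : ContinuousOn u (Icc a b)) :
    IntegrableOn (fun x => u x * Real.log (b - x)) (Ioo a b) := by
  have hlog : IntervalIntegrable (fun x => Real.log (b - x)) volume a b := by
    simpa only [sub_sub_cancel, sub_zero] using
      (intervalIntegral.intervalIntegrable_log' (a := b - a) (b := 0)).comp_sub_left b
  rw [← intervalIntegrable_iff_integrableOn_Ioo_of_le hab]
  exact hlog.continuousOn_mul (by rwa [uIcc_of_le hab])

lemma HolderAtDiagonal.integrableOn_finitePart (hG : HolderAtDiagonal C β G a b) (hab : a < b)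
    (hβ : 0 < β) (hc : ContinuousOn (Function.uncurry G) (Icc a b ×ˢ Icc a b)) :
    IntegrableOn (fun x => finitePart (G x) x b) (Ioo a b) :=
  (((hG.continuousOn_integral_slope hab hβ hc).integrableOn_compact isCompact_Icc).mono_set
    Ioo_subset_Icc_self).add (integrableOn_mul_log_sub hab.le (continuousOn_diagonal hc))

end AlongSegment

namespace HasContPartialsOnSquare

variable {f fx ft : ℝ → ℝ → ℝ} {a b x t s C β : ℝ}

lemma hasDerivWithinAt_section (hf : HasContPartialsOnSquare f fx ft a b) (hx : x ∈ Icc a b)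
    (ht : t ∈ Icc x b) : HasDerivWithinAt (f x) (ft x t) (Icc x b) t :=
  (hf.hasDerivWithinAt_snd x hx t ⟨hx.1.trans ht.1, ht.2⟩).mono (Icc_subset_Icc_left hx.1)

lemma exists_holderAtDiagonal_one (hf : HasContPartialsOnSquare f fx ft a b) :
    ∃ M, HolderAtDiagonal M 1 f a b := by
  obtain ⟨M, hM⟩ :=
    (isCompact_Icc.prod isCompact_Icc).exists_bound_of_continuousOn hf.continuousOn_snd
  refine ⟨M, fun x hx t ht => ?_⟩
  have hmvt := (convex_Icc x b).norm_image_sub_le_of_norm_hasDerivWithin_le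
    (fun s hs => hf.hasDerivWithinAt_section hx hs)
    (fun s hs => hM (x, s) ⟨hx, hx.1.trans hs.1, hs.2⟩) (left_mem_Icc.2 hx.2) ht
  rwa [Real.norm_eq_abs, Real.norm_of_nonneg (sub_nonneg.2 ht.1),
    ← Real.rpow_one (t - x)] at hmvt

lemma hasFDerivAt (hf : HasContPartialsOnSquare f fx ft a b) (hx : x ∈ Ioo a b)
    (ht : t ∈ Ioo a b) :
    HasFDerivAt (Function.uncurry f)
      ((ContinuousLinearMap.toSpanSingleton ℝ (fx x t)).coprod
        (ContinuousLinearMap.toSpanSingleton ℝ (ft x t))) (x, t) := by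
  have hnhds : Ioo a b ×ˢ Ioo a b ∈ 𝓝 (x, t) :=
    prod_mem_nhds (Ioo_mem_nhds hx.1 hx.2) (Ioo_mem_nhds ht.1 ht.2)
  have hsq : Icc a b ×ˢ Icc a b ∈ 𝓝 (x, t) :=
    mem_of_superset hnhds (prod_mono Ioo_subset_Icc_self Ioo_subset_Icc_self)
  have hspan := (ContinuousLinearMap.toSpanSingletonCLE (𝕜 := ℝ) (E := ℝ)).continuous
  refine (hasStrictFDerivAt_uncurry_coprod (𝕜 := ℝ) (f := f)
    (f₁ := fun x t => ContinuousLinearMap.toSpanSingleton ℝ (fx x t))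
    (f₂ := fun x t => ContinuousLinearMap.toSpanSingleton ℝ (ft x t)) ?_ ?_
    (hspan.continuousAt.comp (hf.continuousOn_fst.continuousAt hsq))
    (hspan.continuousAt.comp (hf.continuousOn_snd.continuousAt hsq))).hasFDerivAt
  · filter_upwards [hnhds] with p hp
    exact ((hf.hasDerivWithinAt_fst p.1 (Ioo_subset_Icc_self hp.1) p.2
      (Ioo_subset_Icc_self hp.2)).hasDerivAt (Icc_mem_nhds hp.1.1 hp.1.2)).hasFDerivAt
  · filter_upwards [hnhds] with p hp
    exact ((hf.hasDerivWithinAt_snd p.1 (Ioo_subset_Icc_self hp.1) p.2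
      (Ioo_subset_Icc_self hp.2)).hasDerivAt (Icc_mem_nhds hp.2.1 hp.2.2)).hasFDerivAt

lemma hasDerivAt_alongSegment (hf : HasContPartialsOnSquare f fx ft a b) (hx : x ∈ Ioo a b)
    (hs : s ∈ Ico (0 : ℝ) 1) :
    HasDerivAt (fun y => alongSegment f b y s)
      (alongSegment fx b x s + (1 - s) * alongSegment ft b x s) x := by
  have hmem : x + (b - x) * s ∈ Ioo a b := by
    have h₀ := mul_nonneg (sub_pos.2 hx.2).le hs.1
    have h₁ := mul_pos (sub_pos.2 hx.2) (sub_pos.2 hs.2)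
    constructor <;> linarith [hx.1]
  have hpoint : HasDerivAt (fun y => (y, y + (b - y) * s)) (1, 1 + -1 * s) x :=
    (hasDerivAt_id x).prodMk
      ((hasDerivAt_id x).add (((hasDerivAt_id x).const_sub b).mul_const s))
  refine ((hf.hasFDerivAt hx hmem).comp_hasDerivAt x hpoint).congr_deriv ?_
  simp only [ContinuousLinearMap.coprod_apply, ContinuousLinearMap.toSpanSingleton_apply,
    smul_eq_mul, alongSegment]
  ring

lemma hasDerivAt_slope_alongSegment (hf : HasContPartialsOnSquare f fx ft a b)
    (hx : x ∈ Ioo a b) (hs : s ∈ Ioo (0 : ℝ) 1) :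
    HasDerivAt (fun y => slope (alongSegment f b y) 0 s)
      (slope (alongSegment fx b x) 0 s + slope (alongSegment ft b x) 0 s
        - alongSegment ft b x s) x := by
  simp only [slope_def_field, sub_zero]
  refine (((hf.hasDerivAt_alongSegment hx (Ioo_subset_Ico_self hs)).sub
    (hf.hasDerivAt_alongSegment hx (left_mem_Ico.2 zero_lt_one))).div_const s).congr_deriv ?_
  field [hs.1.ne']

lemma integral_alongSegment_snd (hf : HasContPartialsOnSquare f fx ft a b) (hx : x ∈ Ioo a b) :
    ∫ s in (0 : ℝ)..1, alongSegment ft b x s = slope (f x) x b := by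
  have hx' := Ioo_subset_Icc_self hx
  have hint : ∫ t in x..b, ft x t = f x b - f x x :=
    intervalIntegral.integral_eq_sub_of_hasDerivAt_of_le hx.2.le
      (continuousOn_section hf.continuousOn hx')
      (fun t ht => (hf.hasDerivWithinAt_section hx' (Ioo_subset_Icc_self ht)).hasDerivAt
        (Icc_mem_nhds ht.1 ht.2))
      ((continuousOn_section hf.continuousOn_snd hx').intervalIntegrable_of_Icc hx.2.le)
  simp only [alongSegment]
  rw [intervalIntegral.integral_comp_add_mul (ft x) (sub_pos.2 hx.2).ne' x, mul_zero, add_zero,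
    mul_one, add_sub_cancel, hint, slope_def_module]

lemma exists_bound_deriv_slope_alongSegment (hf : HasContPartialsOnSquare f fx ft a b)
    (hab : a < b) (hβ : 0 < β) (hfx : HolderAtDiagonal C β fx a b)
    (hft : HolderAtDiagonal C β ft a b) :
    ∃ B : ℝ → ℝ, IntervalIntegrable B volume 0 1 ∧ ∀ x ∈ Icc a b, ∀ s ∈ Ioc (0 : ℝ) 1,
      |slope (alongSegment fx b x) 0 s + slope (alongSegment ft b x) 0 s
        - alongSegment ft b x s| ≤ B s := by
  obtain ⟨M, hM⟩ := (isCompact_Icc.prod isCompact_Icc).exists_bound_of_continuousOn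
    (continuousOn_uncurry_alongSegment hf.continuousOn_snd)
  have hpow : IntervalIntegrable (fun s : ℝ => C * (b - a) ^ β * s ^ (β - 1)) volume 0 1 :=
    (intervalIntegral.intervalIntegrable_rpow' (by linarith)).const_mul _
  refine ⟨_, (hpow.add hpow).add (intervalIntegrable_const (c := M)), fun x hx s hs => ?_⟩
  exact norm_sub_le_of_le
    (norm_add_le_of_le (hfx.abs_slope_alongSegment_le hab hβ.le hx hs)
      (hft.abs_slope_alongSegment_le hab hβ.le hx hs))
    (hM (x, s) ⟨hx, Ioc_subset_Icc_self hs⟩)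

lemma hasDerivAt_integral_slope_alongSegment (hf : HasContPartialsOnSquare f fx ft a b)
    (hβ : 0 < β) (hfx : HolderAtDiagonal C β fx a b) (hft : HolderAtDiagonal C β ft a b)
    (hx : x ∈ Ioo a b) :
    HasDerivAt (fun y => ∫ s in (0 : ℝ)..1, slope (alongSegment f b y) 0 s)
      ((∫ s in (0 : ℝ)..1, slope (alongSegment fx b x) 0 s)
        + (∫ s in (0 : ℝ)..1, slope (alongSegment ft b x) 0 s)
        - ∫ s in (0 : ℝ)..1, alongSegment ft b x s) x := by
  have hab := hx.1.trans hx.2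
  have hx' := Ioo_subset_Icc_self hx
  have hseg := continuousOn_uncurry_alongSegment hf.continuousOn
  have hsegt := continuousOn_uncurry_alongSegment hf.continuousOn_snd
  obtain ⟨K, hK⟩ := hf.exists_holderAtDiagonal_one
  obtain ⟨B, hBint, hB⟩ := hf.exists_bound_deriv_slope_alongSegment hab hβ hfx hft
  have hif := hK.intervalIntegrable_slope_alongSegment hab one_pos hf.continuousOn hx'
  have hix := hfx.intervalIntegrable_slope_alongSegment hab hβ hf.continuousOn_fst hx'
  have hit := hft.intervalIntegrable_slope_alongSegment hab hβ hf.continuousOn_snd hx'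
  have hiseg : IntervalIntegrable (alongSegment ft b x) volume 0 1 :=
    (hsegt.uncurry_left x hx').intervalIntegrable_of_Icc zero_le_one
  rw [← intervalIntegral.integral_add hix hit,
    ← intervalIntegral.integral_sub (hix.add hit) hiseg]
  refine (intervalIntegral.hasDerivAt_integral_of_dominated_loc_of_deriv_le
    (F' := fun y s => slope (alongSegment fx b y) 0 s + slope (alongSegment ft b y) 0 s
      - alongSegment ft b y s)
    (bound := B) (Ioo_mem_nhds hx.1 hx.2) ?_ hif
    ((hix.add hit).sub hiseg).aestronglyMeasurable_restrict_uIoc ?_ hBint ?_).2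
  · filter_upwards [Ioo_mem_nhds hx.1 hx.2] with y hy
    exact aestronglyMeasurable_slope zero_le_one (hseg.uncurry_left y (Ioo_subset_Icc_self hy))
  · refine ae_of_all _ fun s hs y hy => hB y (Ioo_subset_Icc_self hy) s ?_
    rwa [uIoc_of_le zero_le_one] at hs
  · filter_upwards [Measure.ae_ne volume 1] with s hs₁ hs y hy
    rw [uIoc_of_le zero_le_one] at hs
    exact hf.hasDerivAt_slope_alongSegment hy ⟨hs.1, hs.2.lt_of_ne hs₁⟩

lemma hasDerivAt_integral_slope (hf : HasContPartialsOnSquare f fx ft a b) (hβ : 0 < β)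
    (hfx : HolderAtDiagonal C β fx a b) (hft : HolderAtDiagonal C β ft a b) (hx : x ∈ Ioo a b) :
    HasDerivAt (fun y => ∫ t in y..b, slope (f y) y t)
      ((∫ t in x..b, slope (fx x) x t) + (∫ t in x..b, slope (ft x) x t) - slope (f x) x b) x := by
  simp only [integral_slope_eq_integral_slope_alongSegment, ← hf.integral_alongSegment_snd hx]
  exact hf.hasDerivAt_integral_slope_alongSegment hβ hfx hft hx

lemma hasDerivAt_finitePart (hf : HasContPartialsOnSquare f fx ft a b) (hβ : 0 < β)
    (hfx : HolderAtDiagonal C β fx a b) (hft : HolderAtDiagonal C β ft a b) (hx : x ∈ Ioo a b) :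
    HasDerivAt (fun y => finitePart (f y) y b)
      (finitePart (fx x) x b + finitePart (ft x) x b - f x b / (b - x)) x := by
  have hbx := (sub_pos.2 hx.2).ne'
  have hdiag : HasDerivAt (fun y => f y y) (fx x x + ft x x) x := by
    simpa [alongSegment] using hf.hasDerivAt_alongSegment hx (left_mem_Ico.2 zero_lt_one)
  have hlog : HasDerivAt (fun y => Real.log (b - y)) (-1 / (b - x)) x :=
    ((hasDerivAt_id x).const_sub b).log hbx
  refine ((hf.hasDerivAt_integral_slope hβ hfx hft hx).add (hdiag.mul hlog)).congr_deriv ?_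
  simp only [finitePart, slope_def_field]
  ring

lemma integrableOn_endpoint_div_sub (hf : HasContPartialsOnSquare f fx ft a b)
    (hdiag : IntegrableOn (fun x => f x x / (b - x)) (Ioo a b)) :
    IntegrableOn (fun x => f x b / (b - x)) (Ioo a b) := by
  obtain ⟨M, hM⟩ := hf.exists_holderAtDiagonal_one
  refine ((hM.integrableOn_slope_endpoint hf.continuousOn).add hdiag).congr_fun
    (fun x _ => ?_) measurableSet_Ioo
  simp only [Pi.add_apply, slope_def_field]
  ring

end HasContPartialsOnSquare

section WeakDerivative

variable {u u' φ : ℝ → ℝ} {S : Set ℝ}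

lemma integrable_mul_of_support_subset (hu : IntegrableOn u S) (hφ : Continuous φ)
    (hφc : HasCompactSupport φ) (hφS : Function.support φ ⊆ S) :
    Integrable (fun x => u x * φ x) := by
  obtain ⟨C, hC⟩ := hφc.exists_bound_of_continuous hφ
  rw [← integrableOn_iff_integrable_of_support_subset
    ((Function.support_mul_subset_right u φ).trans hφS)]
  exact hu.mul_bdd hφ.aestronglyMeasurable (ae_of_all _ hC)

lemma setIntegral_mul_deriv_eq_neg (hu : ∀ x ∈ S, HasDerivAt u (u' x) x)
    (hui : IntegrableOn u S) (hui' : IntegrableOn u' S) (hφ : ContDiff ℝ 1 φ)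
    (hφc : HasCompactSupport φ) (hφS : tsupport φ ⊆ S) :
    ∫ x in S, u x * deriv φ x = - ∫ x in S, u' x * φ x := by
  have hφ₀ : Function.support φ ⊆ S := (subset_tsupport φ).trans hφS
  have hφ₁ : Function.support (deriv φ) ⊆ S := support_deriv_subset.trans hφS
  rw [setIntegral_eq_integral_of_forall_compl_eq_zero fun x hx => by
      rw [Function.notMem_support.1 fun h => hx (hφ₁ h), mul_zero],
    setIntegral_eq_integral_of_forall_compl_eq_zero fun x hx => by
      rw [Function.notMem_support.1 fun h => hx (hφ₀ h), mul_zero]]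
  exact integral_mul_deriv_eq_deriv_mul_of_integrable (fun x hx => hu x (hφS hx))
    (fun x _ => (hφ.differentiable one_ne_zero x).hasDerivAt)
    (integrable_mul_of_support_subset hui (hφ.continuous_deriv le_rfl) hφc.deriv hφ₁)
    (integrable_mul_of_support_subset hui' hφ.continuous hφc hφ₀)
    (integrable_mul_of_support_subset hui hφ.continuous hφc hφ₀)

end WeakDerivative

lemma holderAtDiagonal_of_holder {G : ℝ → ℝ → ℝ} {a b α C : ℝ} (hα : 0 < α)
    (hG : ∀ x₁ ∈ Icc a b, ∀ t₁ ∈ Icc a b, ∀ x₂ ∈ Icc a b, ∀ t₂ ∈ Icc a b,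
      |G x₁ t₁ - G x₂ t₂| ≤ C * (|x₁ - x₂| ^ α + |t₁ - t₂| ^ α)) :
    HolderAtDiagonal C α G a b := by
  intro x hx t ht
  simpa [Real.zero_rpow hα.ne', abs_of_nonneg (sub_nonneg.2 ht.1)] using
    hG x hx t ⟨hx.1.trans ht.1, ht.2⟩ x hx x hx

theorem stmt1_general {a b β C : ℝ} (hab : a < b) (hβ : 0 < β) {f fx ft : ℝ → ℝ → ℝ}
    (hf : HasContPartialsOnSquare f fx ft a b) (hfx : HolderAtDiagonal C β fx a b)
    (hft : HolderAtDiagonal C β ft a b)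
    (hdiag : IntegrableOn (fun x => f x x / (b - x)) (Ioo a b)) :
    ∃ Hf h : ℝ → ℝ,
      (∀ x ∈ Ioo a b, HasPF1Upper (f x) x b (Hf x)) ∧
      (∀ x ∈ Ioo a b, ∃ L₂ L₁ : ℝ,
        HasPF2Upper (f x) (ft x x) x b L₂ ∧ HasPF1Upper (fx x) x b L₁ ∧
        h x = L₂ + L₁ - ft x x) ∧
      IntegrableOn Hf (Ioo a b) ∧ IntegrableOn h (Ioo a b) ∧
      ∀ φ : ℝ → ℝ, ContDiff ℝ 1 φ → tsupport φ ⊆ Ioo a b →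
        ∫ x in Ioo a b, Hf x * deriv φ x = - ∫ x in Ioo a b, h x * φ x := by
  obtain ⟨M, hM⟩ := hf.exists_holderAtDiagonal_one
  have hHint := hM.integrableOn_finitePart hab one_pos hf.continuousOn
  have hhint := ((hfx.integrableOn_finitePart hab hβ hf.continuousOn_fst).add
    (hft.integrableOn_finitePart hab hβ hf.continuousOn_snd)).sub
    (hf.integrableOn_endpoint_div_sub hdiag)
  refine ⟨fun x => finitePart (f x) x b,
    fun x => finitePart (fx x) x b + finitePart (ft x) x b - f x b / (b - x),
    fun x hx => ?_, fun x hx => ?_, hHint, hhint, fun φ hφ hφS => ?_⟩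
  · exact hasPF1Upper_finitePart hx.2
      (hM.intervalIntegrable_slope one_pos hf.continuousOn (Ioo_subset_Icc_self hx))
  · have hx' := Ioo_subset_Icc_self hx
    have hpf_fx := hasPF1Upper_finitePart hx.2
      (hfx.intervalIntegrable_slope hβ hf.continuousOn_fst hx')
    have hpf_ft := hasPF1Upper_finitePart hx.2
      (hft.intervalIntegrable_slope hβ hf.continuousOn_snd hx')
    exact ⟨_, _, hpf_ft.hasPF2Upper hx.2 (fun t ht => hf.hasDerivWithinAt_section hx' ht)
      (continuousOn_section hf.continuousOn_snd hx'), hpf_fx, by ring⟩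
  · exact setIntegral_mul_deriv_eq_neg (fun x hx => hf.hasDerivAt_finitePart hβ hfx hft hx)
      hHint hhint hφ (isCompact_Icc.of_isClosed_subset (isClosed_tsupport φ)
        (hφS.trans Ioo_subset_Icc_self)) hφS

/-- for `f ∈ C^{1+α}([a,b]²)` (partial derivatives `fx = ∂f/∂x`,
`ft = ∂f/∂t`, both `α`-Hölder), if `F₁(x)=f(x,x)/(b−x)`, `F₂(x)=log(b−x)·ft(x,x)`,
`F₃(x)=log(b−x)·fx(x,x)` are integrable on `(a,b)`, then
`Hf(x) = p.f.∫_x^b f(x,t)/(t−x) dt` and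
`h(x) = p.f.∫_x^b f(x,t)/(t−x)² dt + p.f.∫_x^b fx(x,t)/(t−x) dt − ft(x,x)`
are integrable on `(a,b)` and `h` is the weak derivative of `Hf`:
`∫ Hf·φ' = −∫ h·φ` for all test functions `φ ∈ C₀^∞((a,b))`. -/
theorem stmt1 (a b α : ℝ) (hab : a < b) (hα : 0 < α) (hα1 : α ≤ 1)
    (f fx ft : ℝ → ℝ → ℝ) (Cα : ℝ)
    (hf : ContinuousOn (fun p : ℝ × ℝ => f p.1 p.2) (Set.Icc a b ×ˢ Set.Icc a b))
    (hdx : ∀ x ∈ Set.Icc a b, ∀ t ∈ Set.Icc a b,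
      HasDerivWithinAt (fun y => f y t) (fx x t) (Set.Icc a b) x)
    (hdt : ∀ x ∈ Set.Icc a b, ∀ t ∈ Set.Icc a b,
      HasDerivWithinAt (fun s => f x s) (ft x t) (Set.Icc a b) t)
    (hfxc : ContinuousOn (fun p : ℝ × ℝ => fx p.1 p.2) (Set.Icc a b ×ˢ Set.Icc a b))
    (hftc : ContinuousOn (fun p : ℝ × ℝ => ft p.1 p.2) (Set.Icc a b ×ˢ Set.Icc a b))
    (hxholder : ∀ x₁ ∈ Set.Icc a b, ∀ t₁ ∈ Set.Icc a b, ∀ x₂ ∈ Set.Icc a b, ∀ t₂ ∈ Set.Icc a b,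
      |fx x₁ t₁ - fx x₂ t₂| ≤ Cα * (|x₁ - x₂| ^ α + |t₁ - t₂| ^ α))
    (htholder : ∀ x₁ ∈ Set.Icc a b, ∀ t₁ ∈ Set.Icc a b, ∀ x₂ ∈ Set.Icc a b, ∀ t₂ ∈ Set.Icc a b,
      |ft x₁ t₁ - ft x₂ t₂| ≤ Cα * (|x₁ - x₂| ^ α + |t₁ - t₂| ^ α))
    (hF₁ : IntegrableOn (fun x => f x x / (b - x)) (Set.Ioo a b))
    (hF₂ : IntegrableOn (fun x => Real.log (b - x) * ft x x) (Set.Ioo a b))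
    (hF₃ : IntegrableOn (fun x => Real.log (b - x) * fx x x) (Set.Ioo a b)) :
    ∃ Hf h : ℝ → ℝ,
      (∀ x ∈ Set.Ioo a b, HasPF1Upper (fun t => f x t) x b (Hf x)) ∧
      (∀ x ∈ Set.Ioo a b, ∃ L₂ L₁ : ℝ,
        HasPF2Upper (fun t => f x t) (ft x x) x b L₂ ∧
        HasPF1Upper (fun t => fx x t) x b L₁ ∧
        h x = L₂ + L₁ - ft x x) ∧
      IntegrableOn Hf (Set.Ioo a b) ∧ IntegrableOn h (Set.Ioo a b) ∧
      ∀ φ : ℝ → ℝ, ContDiff ℝ (⊤ : ℕ∞) φ → tsupport φ ⊆ Set.Ioo a b →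
        ∫ x in Set.Ioo a b, Hf x * deriv φ x = - ∫ x in Set.Ioo a b, h x * φ x := by
  obtain ⟨Hf, h, hpf₁, hpf₂, hHint, hhint, hweak⟩ := stmt1_general hab hα ⟨hf, hdx, hdt, hfxc, hftc⟩
    (holderAtDiagonal_of_holder hα hxholder) (holderAtDiagonal_of_holder hα htholder) hF₁
  exact ⟨Hf, h, hpf₁, hpf₂, hHint, hhint, fun φ hφ => hweak φ (hφ.of_le (by exact_mod_cast le_top))⟩
end
end

section
/- Let f ∈ C(Ḡ, C^α(I²)) for some α > 0. Then for every x ∈ Ḡ all the inner Hadamard finite part integrals exist, the functions E ↦ p.f.∫_E^{E_m} f(x,E',E)/(E'−E) dE' and E' ↦ p.f.∫_{E₀}^{E'} f(x,E',E)/(E'−E) dE are integrable on I, and ∫_I ( p.f.∫_E^{E_m} f(x,E',E)/(E'−E) dE' ) dE = ∫_I ( p.f.∫_{E₀}^{E'} f(x,E',E)/(E'−E) dE ) dE'. -/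
open MeasureTheory Filter Set
open scoped Topology

noncomputable section

abbrev E3 : Type := EuclideanSpace ℝ (Fin 3)

/-- Hadamard finite part of order 1 with lower limit `a`:
`p.f.∫_a^x g(t)/(x−t) dt = L` means
`lim_{ε→0⁺} ( ∫_a^{x−ε} g(t)/(x−t) dt + g(x)·log ε ) = L`. -/
def HasPF1Lower (g : ℝ → ℝ) (a x L : ℝ) : Prop :=
  Tendsto (fun ε : ℝ => (∫ t in a..(x - ε), g t / (x - t)) + g x * Real.log ε)
    (𝓝[>] (0 : ℝ)) (𝓝 L)

/-!
Subtracting `h x` from the numerator turns the finite part of `h(t)/(t-x)` over `[x, b]` into the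
absolutely convergent integral of the slope of `h` at `x`, plus `h(x) log (b-x)`. It is the limit as
`ε → 0⁺` of the integral of `h(t)` against the kernel `1/(t-x)` cut off to `t - x > ε`, plus
`h(x) log ε`. For a fixed `ε` the cut-off kernel is bounded, so Fubini's theorem exchanges the order
of integration, while the divergent term is `(∫ g(t,t) dt) log ε` in both orders. A Dini modulus at
the diagonal dominates the regularizations by a constant plus `|g(t,t) log (b-t)|`, uniformly in
`ε < 1`, so that the limit passes under the outer integral. The reflection `(s,t) ↦ (-t,-s)`
exchanges lower and upper finite parts, and a Hölder modulus `C r^α` satisfies Dini's condition.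
-/

section FinitePart

variable {h ω : ℝ → ℝ} {a b c x ε L : ℝ}

/-- Closed form of the upper Hadamard finite part `p.f.∫_x^b h(t)/(t-x) dt`: the finite part of the
integral of the kernel `1/(t-x)` alone is `log (b - x)`. -/
def upperFinitePart (h : ℝ → ℝ) (x b : ℝ) : ℝ :=
  (∫ t in x..b, slope h x t) + h x * Real.log (b - x)

/-- Closed form of the lower Hadamard finite part `p.f.∫_a^x h(t)/(x-t) dt`. -/
def lowerFinitePart (h : ℝ → ℝ) (a x : ℝ) : ℝ :=
  h x * Real.log (x - a) - ∫ t in a..x, slope h x t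

lemma upperFinitePart_comp_neg (h : ℝ → ℝ) (a x : ℝ) :
    upperFinitePart (fun t => h (-t)) (-x) (-a) = lowerFinitePart h a x := by
  have hslope (t : ℝ) : slope (fun t => h (-t)) (-x) (-t) = -slope h x t := by
    simp only [slope_def_field, neg_neg, neg_sub_neg]
    rw [← neg_sub t x, div_neg]
  rw [upperFinitePart, lowerFinitePart, ← intervalIntegral.integral_comp_neg]
  simp only [hslope, intervalIntegral.integral_neg, neg_neg, neg_sub_neg]
  ring

lemma hasPF1Upper_comp_neg_iff :
    HasPF1Upper (fun t => h (-t)) (-x) (-a) L ↔ HasPF1Lower h a x L := by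
  have hint (ε : ℝ) :
      ∫ t in (-x + ε)..(-a), h (-t) / (t - -x) = ∫ t in a..(x - ε), h t / (x - t) := by
    rw [show -x + ε = -(x - ε) by ring, ← intervalIntegral.integral_comp_neg]
    simp only [neg_neg, neg_sub_neg]
  simp only [HasPF1Upper, HasPF1Lower, hint, neg_neg]

lemma norm_slope_le (hhω : ∀ t ∈ Ioc x b, |h t - h x| ≤ ω (t - x)) :
    ∀ t ∈ Ioc x b, ‖slope h x t‖ ≤ ‖ω (t - x) / (t - x)‖ := by
  intro t ht
  rw [slope_def_field, norm_div, norm_div]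
  gcongr
  exact (hhω t ht).trans (le_abs_self _)

lemma intervalIntegrable_slope_s2 (hxb : x ≤ b) (hbc : b - x ≤ c) (hh : ContinuousOn h (Ioc x b))
    (hω : IntervalIntegrable (fun r => ω r / r) volume 0 c)
    (hhω : ∀ t ∈ Ioc x b, |h t - h x| ≤ ω (t - x)) :
    IntervalIntegrable (slope h x) volume x b := by
  have hω' : IntervalIntegrable (fun t => ω (t - x) / (t - x)) volume x b := by
    have := hω.mono_set (uIcc_subset_uIcc_left (mem_uIcc_of_le (sub_nonneg.2 hxb) hbc))
    simpa using this.comp_sub_right x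
  refine hω'.mono_fun ?_ ?_
  · rw [uIoc_of_le hxb, slope_fun_def_field]
    exact ((hh.sub continuousOn_const).div (by fun_prop) fun t ht =>
      sub_ne_zero.2 ht.1.ne').aestronglyMeasurable measurableSet_Ioc
  · rw [uIoc_of_le hxb]
    exact ae_restrict_of_forall_mem measurableSet_Ioc (norm_slope_le hhω)

lemma integral_norm_slope_le (hxb : x ≤ b) (hbc : b - x ≤ c)
    (hω : IntervalIntegrable (fun r => ω r / r) volume 0 c)
    (hhω : ∀ t ∈ Ioc x b, |h t - h x| ≤ ω (t - x)) :
    ∫ t in x..b, ‖slope h x t‖ ≤ ∫ r in 0..c, ‖ω r / r‖ := by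
  have hω' : IntervalIntegrable (fun t => ‖ω (t - x) / (t - x)‖) volume x b := by
    have := hω.mono_set (uIcc_subset_uIcc_left (mem_uIcc_of_le (sub_nonneg.2 hxb) hbc))
    simpa using this.norm.comp_sub_right x
  calc ∫ t in x..b, ‖slope h x t‖
      ≤ ∫ t in x..b, ‖ω (t - x) / (t - x)‖ := by
        simp only [intervalIntegral.integral_of_le hxb]
        exact integral_mono_of_nonneg (Eventually.of_forall fun t => norm_nonneg _) hω'.1
          (ae_restrict_of_forall_mem measurableSet_Ioc (norm_slope_le hhω))
    _ = ∫ r in 0..(b - x), ‖ω r / r‖ := by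
        rw [intervalIntegral.integral_comp_sub_right (fun r => ‖ω r / r‖), sub_self]
    _ ≤ ∫ r in 0..c, ‖ω r / r‖ :=
        intervalIntegral.integral_mono_interval le_rfl (sub_nonneg.2 hxb) hbc
          (Eventually.of_forall fun r => norm_nonneg _) hω.norm

lemma integral_div_sub_add_log (hε : 0 < ε) (hεb : ε ≤ b - x)
    (hs : IntervalIntegrable (slope h x) volume x b) :
    (∫ t in (x + ε)..b, h t / (t - x)) + h x * Real.log ε
      = (∫ t in (x + ε)..b, slope h x t) + h x * Real.log (b - x) := by
  have hsplit : ∀ t, h t / (t - x) = slope h x t + h x * (t - x)⁻¹ := fun t => by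
    rw [slope_def_field]; ring
  have hinv : IntervalIntegrable (fun t => h x * (t - x)⁻¹) volume (x + ε) b := by
    refine (continuousOn_const.mul (ContinuousOn.inv₀ (by fun_prop) ?_)).intervalIntegrable
    intro t ht
    rw [uIcc_of_le (by linarith)] at ht
    linarith [ht.1]
  have hs' : IntervalIntegrable (slope h x) volume (x + ε) b :=
    hs.mono_set (uIcc_subset_uIcc_right (mem_uIcc_of_le (by linarith) (by linarith)))
  simp only [hsplit]
  rw [intervalIntegral.integral_add hs' hinv, intervalIntegral.integral_const_mul,
    intervalIntegral.integral_comp_sub_right (fun s => s⁻¹), add_sub_cancel_left,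
    integral_inv_of_pos hε (by linarith), Real.log_div (by linarith) hε.ne']
  ring

lemma hasPF1Upper_upperFinitePart (hxb : x < b)
    (hs : IntervalIntegrable (slope h x) volume x b) :
    HasPF1Upper h x b (upperFinitePart h x b) := by
  have hev : ∀ᶠ ε in 𝓝[>] (0 : ℝ), ε ∈ Ioo 0 (b - x) := Ioo_mem_nhdsGT (sub_pos.2 hxb)
  have hadd : Tendsto (fun ε => x + ε) (𝓝[>] 0) (𝓝[uIcc x b] x) := by
    refine tendsto_nhdsWithin_iff.2 ⟨?_, ?_⟩
    · exact ((continuous_const_add x).tendsto' 0 x (add_zero x)).mono_left nhdsWithin_le_nhds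
    · filter_upwards [hev] with ε hε
      rw [uIcc_of_le hxb.le]
      constructor <;> linarith [hε.1, hε.2]
  have hprim : ContinuousOn (fun y => ∫ t in y..b, slope h x t) (uIcc x b) :=
    intervalIntegral.continuousOn_primitive_interval_left (by
      rwa [uIcc_of_le hxb.le, ← intervalIntegrable_iff_integrableOn_Icc_of_le hxb.le])
  have hlim := (hprim x left_mem_uIcc).tendsto.comp hadd
  refine (hlim.add_const (h x * Real.log (b - x))).congr' ?_
  filter_upwards [hev] with ε hε
  exact (integral_div_sub_add_log hε.1 hε.2.le hs).symm

end FinitePart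

section Cutoff

variable {h : ℝ → ℝ} {a b x ε : ℝ}

/-- The kernel `s ↦ 1/s` cut off to `s > ε`; it is bounded, so Fubini applies to it. -/
def cutoffInv (ε : ℝ) : ℝ → ℝ := (Ioi ε).indicator Inv.inv

/-- The regularization whose limit as `ε → 0⁺` is the upper finite part at `x`. The domain of
integration `[a, b]` does not depend on `x`, so that the order of integration can be exchanged. -/
def cutoffFinitePart (h : ℝ → ℝ) (a b x ε : ℝ) : ℝ :=
  (∫ t in a..b, h t * cutoffInv ε (t - x)) + h x * Real.log ε

lemma measurable_cutoffInv (ε : ℝ) : Measurable (cutoffInv ε) :=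
  measurable_inv.indicator measurableSet_Ioi

lemma norm_cutoffInv_le (hε : 0 < ε) (s : ℝ) : ‖cutoffInv ε s‖ ≤ ε⁻¹ := by
  rw [cutoffInv, indicator_apply]
  split_ifs with hs
  · rw [norm_inv]
    exact inv_anti₀ hε (hs.le.trans (le_abs_self s))
  · simpa using hε.le

lemma integral_mul_cutoffInv (h : ℝ → ℝ) (hab : a ≤ b) (hax : a ≤ x + ε) :
    ∫ t in a..b, h t * cutoffInv ε (t - x) = ∫ t in Ioc (x + ε) b, h t / (t - x) := by
  have hind : (fun t => h t * cutoffInv ε (t - x))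
      = (Ioi (x + ε)).indicator (fun t => h t / (t - x)) := by
    ext t
    simp only [cutoffInv, indicator_apply, mem_Ioi, lt_sub_iff_add_lt', mul_ite, mul_zero,
      div_eq_mul_inv]
  rw [intervalIntegral.integral_of_le hab, hind, setIntegral_indicator measurableSet_Ioi,
    Ioc_inter_Ioi, max_eq_right hax]

lemma cutoffFinitePart_of_le (hax : a ≤ x) (hε : 0 < ε) (hεb : ε ≤ b - x) :
    cutoffFinitePart h a b x ε = (∫ t in (x + ε)..b, h t / (t - x)) + h x * Real.log ε := by
  rw [cutoffFinitePart, integral_mul_cutoffInv h (by linarith) (by linarith),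
    intervalIntegral.integral_of_le (by linarith)]

lemma cutoffFinitePart_of_ge (hab : a ≤ b) (hax : a ≤ x + ε) (hεb : b - x ≤ ε) :
    cutoffFinitePart h a b x ε = h x * Real.log ε := by
  rw [cutoffFinitePart, integral_mul_cutoffInv h hab hax, Ioc_eq_empty (by linarith),
    setIntegral_empty, zero_add]

lemma tendsto_cutoffFinitePart (hax : a ≤ x) (hxb : x < b)
    (hs : IntervalIntegrable (slope h x) volume x b) :
    Tendsto (cutoffFinitePart h a b x) (𝓝[>] 0) (𝓝 (upperFinitePart h x b)) := by
  refine (hasPF1Upper_upperFinitePart hxb hs).congr' ?_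
  filter_upwards [Ioo_mem_nhdsGT (sub_pos.2 hxb)] with ε hε
  exact (cutoffFinitePart_of_le hax hε.1 hε.2.le).symm

lemma abs_cutoffFinitePart_le (hax : a ≤ x) (hxb : x < b) (hε : ε ∈ Ioo (0 : ℝ) 1)
    (hs : IntervalIntegrable (slope h x) volume x b) :
    |cutoffFinitePart h a b x ε|
      ≤ (∫ t in x..b, ‖slope h x t‖) + |h x| * |Real.log (b - x)| := by
  have hx : 0 < b - x := sub_pos.2 hxb
  rcases le_total ε (b - x) with hεb | hεb
  · rw [cutoffFinitePart_of_le hax hε.1 hεb, integral_div_sub_add_log hε.1 hεb hs, ← abs_mul]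
    refine (abs_add_le _ _).trans (add_le_add_left ?_ _)
    calc |∫ t in (x + ε)..b, slope h x t|
        ≤ ∫ t in (x + ε)..b, ‖slope h x t‖ :=
          intervalIntegral.abs_integral_le_integral_abs (by linarith)
      _ ≤ ∫ t in x..b, ‖slope h x t‖ :=
          intervalIntegral.integral_mono_interval (by linarith [hε.1]) (by linarith) le_rfl
            (Eventually.of_forall fun t => norm_nonneg _) hs.norm
  · have hlog : |Real.log ε| ≤ |Real.log (b - x)| := by
      rw [abs_of_neg (Real.log_neg hε.1 hε.2),
        abs_of_neg (Real.log_neg hx (hεb.trans_lt hε.2))]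
      exact neg_le_neg (Real.log_le_log hx hεb)
    have hint : 0 ≤ ∫ t in x..b, ‖slope h x t‖ :=
      intervalIntegral.integral_nonneg hxb.le fun t _ => norm_nonneg _
    rw [cutoffFinitePart_of_ge (by linarith) (by linarith [hε.1]) hεb, abs_mul]
    exact (mul_le_mul_of_nonneg_left hlog (abs_nonneg _)).trans (le_add_of_nonneg_left hint)

lemma integrable_mul_cutoffInv {μ : Measure (ℝ × ℝ)} {g : ℝ × ℝ → ℝ} (hg : Integrable g μ)
    (hε : 0 < ε) : Integrable (fun p => g p * cutoffInv ε (p.1 - p.2)) μ :=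
  hg.mul_bdd
    ((measurable_cutoffInv ε).comp (measurable_fst.sub measurable_snd)).aestronglyMeasurable
    (Eventually.of_forall fun _ => norm_cutoffInv_le hε _)

end Cutoff

lemma integrable_of_dominated_of_tendsto {X ι E : Type*} [MeasurableSpace X] {μ : Measure X}
    [NormedAddCommGroup E] {l : Filter ι} [l.NeBot] [l.IsCountablyGenerated]
    {Φ : ι → X → E} {F : X → E} {bound : X → ℝ}
    (hΦ : ∀ᶠ i in l, AEStronglyMeasurable (Φ i) μ)
    (hle : ∀ᶠ i in l, ∀ᵐ y ∂μ, ‖Φ i y‖ ≤ bound y) (hbound : Integrable bound μ)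
    (hlim : ∀ᵐ y ∂μ, Tendsto (fun i => Φ i y) l (𝓝 (F y))) : Integrable F μ := by
  obtain ⟨u, hu⟩ := exists_seq_tendsto l
  obtain ⟨N, hN⟩ := eventually_atTop.1 (hu.eventually (hΦ.and hle))
  have hlimN : ∀ᵐ y ∂μ, Tendsto (fun n => Φ (u (n + N)) y) atTop (𝓝 (F y)) :=
    hlim.mono fun y hy => (hy.comp hu).comp (tendsto_add_atTop_nat N)
  exact ⟨aestronglyMeasurable_of_tendsto_ae atTop (fun n => (hN _ (N.le_add_left n)).1) hlimN,
    hasFiniteIntegral_of_dominated_convergence hbound.2 (fun n => (hN _ (N.le_add_left n)).2) hlimN⟩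

section Square

variable {g : ℝ → ℝ → ℝ} {ω : ℝ → ℝ} {a b t s ε : ℝ}

lemma intervalIntegrable_diagonal_mul_log (hab : a ≤ b)
    (hg : ContinuousOn (fun t => g t t) (Icc a b)) :
    IntervalIntegrable (fun t => g t t * Real.log (b - t)) volume a b := by
  have hlog : IntervalIntegrable (fun t => Real.log (b - t)) volume a b := by
    simpa using (intervalIntegral.intervalIntegrable_log' (a := b - a) (b := 0)).comp_sub_left b
  exact hlog.continuousOn_mul (by rwa [uIcc_of_le hab])

lemma ae_restrict_Ioc_mem_Ico : ∀ᵐ t ∂volume.restrict (Ioc a b), t ∈ Ico a b := by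
  rw [← restrict_Ico_eq_restrict_Ioc]
  exact ae_restrict_mem measurableSet_Ico

/-- Continuity of `g` on the square `[a, b]²` together with a Dini modulus `ω` at the diagonal, on
the triangle `t < s` over which the finite parts are taken. Dini's condition is the integrability
of `ω(r)/r` at `0`; it is what the convergence of the finite parts requires. -/
structure DiniAtDiagonal (g : ℝ → ℝ → ℝ) (ω : ℝ → ℝ) (a b : ℝ) : Prop where
  continuousOn : ContinuousOn (fun p : ℝ × ℝ => g p.1 p.2) (Icc a b ×ˢ Icc a b)
  intervalIntegrable : IntervalIntegrable (fun r => ω r / r) volume 0 (b - a)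
  abs_sub_fst_le : ∀ t ∈ Icc a b, ∀ s ∈ Ioc t b, |g s t - g t t| ≤ ω (s - t)
  abs_sub_snd_le : ∀ s ∈ Icc a b, ∀ t ∈ Ico a s, |g s t - g s s| ≤ ω (s - t)

namespace DiniAtDiagonal

lemma reflect (hg : DiniAtDiagonal g ω a b) :
    DiniAtDiagonal (fun s t => g (-t) (-s)) ω (-b) (-a) := by
  have hmem : ∀ t ∈ Icc (-b) (-a), -t ∈ Icc a b := fun t ht => ⟨le_neg.2 ht.2, neg_le.2 ht.1⟩
  refine ⟨?_, ?_, fun t ht s hs => ?_, fun s hs t ht => ?_⟩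
  · exact hg.continuousOn.comp (f := fun p : ℝ × ℝ => (-p.2, -p.1)) (by fun_prop)
      fun p hp => ⟨hmem _ hp.2, hmem _ hp.1⟩
  · simpa only [neg_sub_neg] using hg.intervalIntegrable
  · simpa only [neg_sub_neg] using
      hg.abs_sub_snd_le (-t) (hmem t ht) (-s) ⟨le_neg.2 hs.2, neg_lt_neg hs.1⟩
  · simpa only [neg_sub_neg] using
      hg.abs_sub_fst_le (-s) (hmem s hs) (-t) ⟨neg_lt_neg ht.2, neg_le.2 ht.1⟩

lemma continuousOn_diagonal (hg : DiniAtDiagonal g ω a b) :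
    ContinuousOn (fun t => g t t) (Icc a b) :=
  hg.continuousOn.comp (f := fun t => (t, t)) (by fun_prop) fun _ ht => ⟨ht, ht⟩

lemma intervalIntegrable_diagonal (hg : DiniAtDiagonal g ω a b) (hab : a ≤ b) :
    IntervalIntegrable (fun t => g t t) volume a b :=
  hg.continuousOn_diagonal.intervalIntegrable_of_Icc hab

lemma intervalIntegrable_slope_section (hg : DiniAtDiagonal g ω a b) (ht : t ∈ Icc a b) :
    IntervalIntegrable (slope (fun s => g s t) t) volume t b := by
  have hsection : ContinuousOn (fun s => g s t) (Ioc t b) :=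
    hg.continuousOn.comp (f := fun s => (s, t)) (by fun_prop)
      fun s hs => ⟨⟨ht.1.trans hs.1.le, hs.2⟩, ht⟩
  exact intervalIntegrable_slope_s2 ht.2 (sub_le_sub_left ht.1 b) hsection hg.intervalIntegrable
    (hg.abs_sub_fst_le t ht)

lemma hasPF1Upper_section (hg : DiniAtDiagonal g ω a b) (ht : t ∈ Ico a b) :
    HasPF1Upper (fun s => g s t) t b (upperFinitePart (fun s => g s t) t b) :=
  hasPF1Upper_upperFinitePart ht.2 (hg.intervalIntegrable_slope_section (Ico_subset_Icc_self ht))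

lemma hasPF1Lower_section (hg : DiniAtDiagonal g ω a b) (hs : s ∈ Ioc a b) :
    HasPF1Lower (g s) a s (lowerFinitePart (g s) a s) := by
  have hupper := hg.reflect.hasPF1Upper_section (t := -s) ⟨neg_le_neg hs.2, neg_lt_neg hs.1⟩
  rw [neg_neg, upperFinitePart_comp_neg] at hupper
  exact hasPF1Upper_comp_neg_iff.1 hupper

lemma integrable_mul_cutoffInv (hg : DiniAtDiagonal g ω a b) (hε : 0 < ε) :
    Integrable (fun p : ℝ × ℝ => g p.1 p.2 * cutoffInv ε (p.1 - p.2))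
      ((volume.restrict (Ioc a b)).prod (volume.restrict (Ioc a b))) := by
  refine _root_.integrable_mul_cutoffInv ?_ hε
  rw [Measure.prod_restrict]
  exact (hg.continuousOn.integrableOn_compact (isCompact_Icc.prod isCompact_Icc)).mono_set
    (prod_mono Ioc_subset_Icc_self Ioc_subset_Icc_self)

lemma intervalIntegrable_integral_mul_cutoffInv (hg : DiniAtDiagonal g ω a b) (hab : a ≤ b)
    (hε : 0 < ε) :
    IntervalIntegrable (fun t => ∫ s in a..b, g s t * cutoffInv ε (s - t)) volume a b := by
  simp only [intervalIntegrable_iff_integrableOn_Ioc_of_le hab, intervalIntegral.integral_of_le hab]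
  exact (hg.integrable_mul_cutoffInv hε).integral_prod_right

lemma intervalIntegrable_cutoffFinitePart (hg : DiniAtDiagonal g ω a b) (hab : a ≤ b)
    (hε : 0 < ε) :
    IntervalIntegrable (fun t => cutoffFinitePart (fun s => g s t) a b t ε) volume a b :=
  (hg.intervalIntegrable_integral_mul_cutoffInv hab hε).add
    ((hg.intervalIntegrable_diagonal hab).mul_const _)

lemma integral_cutoffFinitePart (hg : DiniAtDiagonal g ω a b) (hab : a ≤ b) (hε : 0 < ε) :
    ∫ t in a..b, cutoffFinitePart (fun s => g s t) a b t ε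
      = (∫ t in a..b, ∫ s in a..b, g s t * cutoffInv ε (s - t))
        + (∫ t in a..b, g t t) * Real.log ε := by
  simp only [cutoffFinitePart]
  rw [intervalIntegral.integral_add (hg.intervalIntegrable_integral_mul_cutoffInv hab hε)
    ((hg.intervalIntegrable_diagonal hab).mul_const _), intervalIntegral.integral_mul_const]

lemma eventually_aestronglyMeasurable_cutoffFinitePart (hg : DiniAtDiagonal g ω a b)
    (hab : a ≤ b) :
    ∀ᶠ ε in 𝓝[>] (0 : ℝ), AEStronglyMeasurable
      (fun t => cutoffFinitePart (fun s => g s t) a b t ε) (volume.restrict (Ioc a b)) :=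
  eventually_nhdsWithin_of_forall fun _ hε =>
    (hg.intervalIntegrable_cutoffFinitePart hab hε).aestronglyMeasurable

lemma eventually_ae_norm_cutoffFinitePart_le (hg : DiniAtDiagonal g ω a b) :
    ∀ᶠ ε in 𝓝[>] (0 : ℝ), ∀ᵐ t ∂volume.restrict (Ioc a b),
      ‖cutoffFinitePart (fun s => g s t) a b t ε‖
        ≤ (∫ r in 0..(b - a), ‖ω r / r‖) + |g t t * Real.log (b - t)| := by
  filter_upwards [Ioo_mem_nhdsGT (one_pos : (0 : ℝ) < 1)] with ε hε
  filter_upwards [ae_restrict_Ioc_mem_Ico] with t ht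
  have ht' := Ico_subset_Icc_self ht
  have hslope : ∫ s in t..b, ‖slope (fun s => g s t) t s‖ ≤ ∫ r in 0..(b - a), ‖ω r / r‖ :=
    integral_norm_slope_le ht'.2 (sub_le_sub_left ht.1 b) hg.intervalIntegrable
      (hg.abs_sub_fst_le t ht')
  rw [abs_mul]
  exact (abs_cutoffFinitePart_le ht.1 ht.2 hε (hg.intervalIntegrable_slope_section ht')).trans
    (add_le_add_left hslope _)

lemma integrable_cutoffFinitePart_bound (hg : DiniAtDiagonal g ω a b) (hab : a ≤ b) :
    Integrable (fun t => (∫ r in 0..(b - a), ‖ω r / r‖) + |g t t * Real.log (b - t)|)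
      (volume.restrict (Ioc a b)) :=
  (integrable_const _).add
    (intervalIntegrable_diagonal_mul_log hab hg.continuousOn_diagonal).1.abs

lemma ae_tendsto_cutoffFinitePart (hg : DiniAtDiagonal g ω a b) :
    ∀ᵐ t ∂volume.restrict (Ioc a b),
      Tendsto (fun ε => cutoffFinitePart (fun s => g s t) a b t ε) (𝓝[>] 0)
        (𝓝 (upperFinitePart (fun s => g s t) t b)) := by
  filter_upwards [ae_restrict_Ioc_mem_Ico] with t ht
  exact tendsto_cutoffFinitePart ht.1 ht.2
    (hg.intervalIntegrable_slope_section (Ico_subset_Icc_self ht))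

lemma intervalIntegrable_upperFinitePart (hg : DiniAtDiagonal g ω a b) (hab : a ≤ b) :
    IntervalIntegrable (fun t => upperFinitePart (fun s => g s t) t b) volume a b := by
  rw [intervalIntegrable_iff_integrableOn_Ioc_of_le hab]
  exact integrable_of_dominated_of_tendsto
    (hg.eventually_aestronglyMeasurable_cutoffFinitePart hab)
    hg.eventually_ae_norm_cutoffFinitePart_le (hg.integrable_cutoffFinitePart_bound hab)
    hg.ae_tendsto_cutoffFinitePart

lemma tendsto_integral_upperFinitePart (hg : DiniAtDiagonal g ω a b) (hab : a ≤ b) :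
    Tendsto (fun ε => (∫ t in a..b, ∫ s in a..b, g s t * cutoffInv ε (s - t))
        + (∫ t in a..b, g t t) * Real.log ε) (𝓝[>] 0)
      (𝓝 (∫ t in a..b, upperFinitePart (fun s => g s t) t b)) := by
  have hlim := tendsto_integral_filter_of_dominated_convergence _
    (hg.eventually_aestronglyMeasurable_cutoffFinitePart hab)
    hg.eventually_ae_norm_cutoffFinitePart_le (hg.integrable_cutoffFinitePart_bound hab)
    hg.ae_tendsto_cutoffFinitePart
  simp only [← intervalIntegral.integral_of_le hab] at hlim
  refine hlim.congr' ?_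
  filter_upwards [self_mem_nhdsWithin] with ε hε
  exact hg.integral_cutoffFinitePart hab hε

lemma intervalIntegrable_lowerFinitePart (hg : DiniAtDiagonal g ω a b) (hab : a ≤ b) :
    IntervalIntegrable (fun s => lowerFinitePart (g s) a s) volume a b := by
  rw [IntervalIntegrable.iff_comp_neg]
  simpa only [← upperFinitePart_comp_neg, neg_neg] using
    (hg.reflect.intervalIntegrable_upperFinitePart (neg_le_neg hab)).symm

lemma tendsto_integral_lowerFinitePart (hg : DiniAtDiagonal g ω a b) (hab : a ≤ b) :
    Tendsto (fun ε => (∫ s in a..b, ∫ t in a..b, g s t * cutoffInv ε (s - t))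
        + (∫ t in a..b, g t t) * Real.log ε) (𝓝[>] 0)
      (𝓝 (∫ s in a..b, lowerFinitePart (g s) a s)) := by
  simpa only [← intervalIntegral.integral_comp_neg (a := a) (b := b), neg_neg, neg_sub_neg,
    upperFinitePart_comp_neg] using
    hg.reflect.tendsto_integral_upperFinitePart (neg_le_neg hab)

lemma integral_upperFinitePart_eq_integral_lowerFinitePart (hg : DiniAtDiagonal g ω a b)
    (hab : a ≤ b) :
    ∫ t in a..b, upperFinitePart (fun s => g s t) t b
      = ∫ s in a..b, lowerFinitePart (g s) a s := by
  refine tendsto_nhds_unique (hg.tendsto_integral_upperFinitePart hab)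
    ((hg.tendsto_integral_lowerFinitePart hab).congr' ?_)
  filter_upwards [self_mem_nhdsWithin] with ε hε
  simp only [intervalIntegral.integral_of_le hab]
  rw [integral_integral_swap (hg.integrable_mul_cutoffInv hε)]

end DiniAtDiagonal

lemma intervalIntegrable_const_mul_rpow_div {α : ℝ} (hα : 0 < α) (C c : ℝ) :
    IntervalIntegrable (fun r => C * r ^ α / r) volume 0 c := by
  have hpow : IntervalIntegrable (fun r => C * r ^ (α - 1)) volume 0 c :=
    (intervalIntegral.intervalIntegrable_rpow' (by linarith)).const_mul C
  refine hpow.congr_uIoo fun r hr => ?_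
  have hr0 : r ≠ 0 := by
    rintro rfl
    exact left_notMem_uIoo hr
  simp only [Real.rpow_sub_one hr0, mul_div_assoc]

lemma diniAtDiagonal_of_hoelder {C α : ℝ} (hα : 0 < α)
    (hg : ContinuousOn (fun p : ℝ × ℝ => g p.1 p.2) (Icc a b ×ˢ Icc a b))
    (hH : ∀ s₁ ∈ Icc a b, ∀ t₁ ∈ Icc a b, ∀ s₂ ∈ Icc a b, ∀ t₂ ∈ Icc a b,
      |g s₁ t₁ - g s₂ t₂| ≤ C * (|s₁ - s₂| ^ α + |t₁ - t₂| ^ α)) :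
    DiniAtDiagonal g (fun r => C * r ^ α) a b := by
  refine ⟨hg, intervalIntegrable_const_mul_rpow_div hα C (b - a), fun t ht s hs => ?_,
    fun s hs t ht => ?_⟩
  · simpa [Real.zero_rpow hα.ne', abs_of_pos (sub_pos.2 hs.1)] using
      hH s ⟨ht.1.trans hs.1.le, hs.2⟩ t ht t ht t ht
  · simpa [Real.zero_rpow hα.ne', abs_sub_comm t s, abs_of_pos (sub_pos.2 ht.2)] using
      hH s hs t ⟨ht.1, ht.2.le.trans hs.2⟩ s hs s hs

end Square

theorem stmt2_general {g : ℝ → ℝ → ℝ} {ω : ℝ → ℝ} {a b : ℝ} (hab : a ≤ b)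
    (hg : DiniAtDiagonal g ω a b) :
    ∃ F₁ F₂ : ℝ → ℝ,
      (∀ t ∈ Ico a b, HasPF1Upper (fun s => g s t) t b (F₁ t)) ∧
      (∀ s ∈ Ioc a b, HasPF1Lower (fun t => g s t) a s (F₂ s)) ∧
      IntegrableOn F₁ (Icc a b) ∧ IntegrableOn F₂ (Icc a b) ∧
      ∫ t in Icc a b, F₁ t = ∫ s in Icc a b, F₂ s := by
  refine ⟨fun t => upperFinitePart (fun s => g s t) t b, fun s => lowerFinitePart (g s) a s,
    fun t ht => hg.hasPF1Upper_section ht, fun s hs => hg.hasPF1Lower_section hs, ?_, ?_, ?_⟩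
  · exact (intervalIntegrable_iff_integrableOn_Icc_of_le hab).1
      (hg.intervalIntegrable_upperFinitePart hab)
  · exact (intervalIntegrable_iff_integrableOn_Icc_of_le hab).1
      (hg.intervalIntegrable_lowerFinitePart hab)
  · simpa only [integral_Icc_eq_integral_Ioc, intervalIntegral.integral_of_le hab] using
      hg.integral_upperFinitePart_eq_integral_lowerFinitePart hab

/-- Fubini-type lemma for first-order Hadamard finite parts:
for `f ∈ C(Ḡ, C^α(I²))`, `I = [E₀,E_m]`, and every `x ∈ Ḡ`, all the inner finite parts
exist, both marginal functions are integrable on `I`, and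
`∫_I ( p.f.∫_E^{E_m} f(x,E',E)/(E'−E) dE' ) dE
 = ∫_I ( p.f.∫_{E₀}^{E'} f(x,E',E)/(E'−E) dE ) dE'`. -/
theorem stmt2 (G : Set E3) (hGopen : IsOpen G) (hGbdd : Bornology.IsBounded G)
    (E₀ Em α : ℝ) (hE₀ : 0 ≤ E₀) (hI : E₀ < Em) (hα : 0 < α)
    (f : E3 → ℝ → ℝ → ℝ) (C : ℝ)
    (hf : ContinuousOn (fun p : E3 × ℝ × ℝ => f p.1 p.2.1 p.2.2)
      (closure G ×ˢ Set.Icc E₀ Em ×ˢ Set.Icc E₀ Em))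
    (hHolder : ∀ x ∈ closure G, ∀ E₁' ∈ Set.Icc E₀ Em, ∀ E₁ ∈ Set.Icc E₀ Em,
      ∀ E₂' ∈ Set.Icc E₀ Em, ∀ E₂ ∈ Set.Icc E₀ Em,
      |f x E₁' E₁ - f x E₂' E₂| ≤ C * (|E₁' - E₂'| ^ α + |E₁ - E₂| ^ α)) :
    ∀ x ∈ closure G, ∃ F₁ F₂ : ℝ → ℝ,
      (∀ E ∈ Set.Ico E₀ Em, HasPF1Upper (fun E' => f x E' E) E Em (F₁ E)) ∧
      (∀ E' ∈ Set.Ioc E₀ Em, HasPF1Lower (fun E => f x E' E) E₀ E' (F₂ E')) ∧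
      IntegrableOn F₁ (Set.Icc E₀ Em) ∧ IntegrableOn F₂ (Set.Icc E₀ Em) ∧
      ∫ E in Set.Icc E₀ Em, F₁ E = ∫ E' in Set.Icc E₀ Em, F₂ E' := by
  intro x hx
  have hsection : ContinuousOn (fun p : ℝ × ℝ => f x p.1 p.2) (Icc E₀ Em ×ˢ Icc E₀ Em) :=
    hf.comp (f := fun p : ℝ × ℝ => (x, p)) (by fun_prop) fun p hp => ⟨hx, hp⟩
  exact stmt2_general hI.le (diniAtDiagonal_of_hoelder hα hsection (hHolder x hx))
end
end

section
/- Let f : S×S → ℝ be continuous and let −1 < t < 1. Then ∫_S ( ∫_0^{2π} f(ω, R(ω)g_t(s)) ds ) dω = ∫_S ( ∫_0^{2π} f(R(ω')g_t(s), ω') ds ) dω', where g_t(s) := (√(1−t²)·cos s, √(1−t²)·sin s, t) and the outer integrals are with respect to the surface measure on S. Equivalently, in terms of path-length integrals over the circles Γ_t^ω := {ω' ∈ S : ω·ω' = t}: ∫_S ∫_{Γ_t^ω} f(ω,ω') dℓ(ω') dω = ∫_S ∫_{Γ_t^{ω'}} f(ω,ω') dℓ(ω) dω'. -/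
open MeasureTheory Filter Set Metric
open scoped Topology Real

noncomputable section

/-- The surface measure on the unit sphere `S² ⊂ ℝ³`, viewed as a measure on `ℝ³`. -/
def nuS : Measure E3 := ((volume : Measure E3).toSphere).map Subtype.val

/-- The vector `(a,b,c) ∈ ℝ³` as an element of `EuclideanSpace ℝ (Fin 3)`. -/
def vec3 (a b c : ℝ) : E3 := (EuclideanSpace.equiv (Fin 3) ℝ).symm ![a, b, c]

/-- The third standard basis vector `e₃`. -/
def e₃ : E3 := EuclideanSpace.single 2 1

/-- The constant-speed parametrization `g_t(s) = (√(1−t²)cos s, √(1−t²)sin s, t)` of the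
horizontal circle at height `t`. -/
def gcirc (t s : ℝ) : E3 :=
  vec3 (Real.sqrt (1 - t ^ 2) * Real.cos s) (Real.sqrt (1 - t ^ 2) * Real.sin s) t

/-!
Consider the law of the pair `(ω, R(ω)g_t(s))` for uniform `ω` and `s`. The circle measure at
height `t` is invariant under the isometries fixing `e₃`, so this law does not depend on the choice
of `R` and is invariant under the diagonal action of `O(3)` on `ℝ³ × ℝ³`. Exchanging the two
coordinates commutes with `O(3)` and preserves every orbit of pairs of unit vectors, because a
reflection exchanges two vectors of equal norm. Averaging over the compact group `O(3)` shows that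
a map with these two properties preserves every invariant finite measure, so the law is symmetric.
-/

open ProbabilityTheory

section GroupAction

variable {G X : Type*} [Group G] [MeasurableSpace G] [MulAction G X]

lemma measure_inv_smul_mem_smul [MeasurableMul G] (η : Measure G) [η.IsMulLeftInvariant]
    (s : Set X) (h : G) (x : X) :
    η {g | g⁻¹ • h • x ∈ s} = η {g | g⁻¹ • x ∈ s} := by
  rw [← measure_preimage_mul η h⁻¹ {g | g⁻¹ • x ∈ s}]
  simp only [preimage_ofPred_eq, mul_inv_rev, inv_inv, mul_smul]

variable [MeasurableInv G] [MeasurableSpace X] [MeasurableSMul₂ G X]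

lemma measure_univ_mul_eq_lintegral_measure_inv_smul_mem (η : Measure G) [IsFiniteMeasure η]
    (μ : Measure X) [SFinite μ] [SMulInvariantMeasure G X μ] {s : Set X} (hs : MeasurableSet s) :
    η univ * μ s = ∫⁻ x, η {g | g⁻¹ • x ∈ s} ∂μ := by
  have hmeas : MeasurableSet {p : G × X | p.1⁻¹ • p.2 ∈ s} :=
    (measurable_fst.inv.smul measurable_snd) hs
  calc
    η univ * μ s = ∫⁻ g, μ ((g⁻¹ • ·) ⁻¹' s) ∂η := by
      simp only [measure_preimage_smul, lintegral_const, mul_comm]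
    _ = (η.prod μ) {p : G × X | p.1⁻¹ • p.2 ∈ s} := (Measure.prod_apply hmeas).symm
    _ = ∫⁻ x, η {g | g⁻¹ • x ∈ s} ∂μ := Measure.prod_apply_symm hmeas

-- Averaging over `G` replaces a set by a function constant on orbits, which cannot see `T`.
theorem measurePreserving_of_ae_mem_orbit [MeasurableMul G] (η : Measure G) [IsFiniteMeasure η]
    [NeZero η] [η.IsMulLeftInvariant] {μ : Measure X} [SFinite μ] [SMulInvariantMeasure G X μ]
    {T : X → X} (hT : Measurable T) (hT_smul : ∀ (g : G) x, T (g • x) = g • T x)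
    (hT_orbit : ∀ᵐ x ∂μ, T x ∈ MulAction.orbit G x) : MeasurePreserving T μ μ := by
  refine ⟨hT, Measure.ext fun s hs => ?_⟩
  rw [Measure.map_apply hT hs,
    ← ENNReal.mul_right_inj (NeZero.ne (η univ)) (measure_ne_top η univ),
    measure_univ_mul_eq_lintegral_measure_inv_smul_mem η μ hs,
    measure_univ_mul_eq_lintegral_measure_inv_smul_mem η μ (hT hs)]
  refine lintegral_congr_ae ?_
  filter_upwards [hT_orbit] with x ⟨h, hx⟩
  simp only [mem_preimage, hT_smul, ← hx, measure_inv_smul_mem_smul]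

end GroupAction

section CompProd

variable {α β : Type*} [MeasurableSpace α] [MeasurableSpace β]

theorem measurePreserving_prodMap_compProd {ν : Measure α} [SFinite ν] {κ : Kernel α β}
    [IsSFiniteKernel κ] {S : α → α} {T : β → β} (hS : MeasurePreserving S ν ν) (hT : Measurable T)
    (hκ : ∀ᵐ a ∂ν, κ (S a) = (κ a).map T) :
    MeasurePreserving (Prod.map S T) (ν ⊗ₘ κ) (ν ⊗ₘ κ) := by
  have hST : Measurable (Prod.map S T) := hS.measurable.prodMap hT
  refine ⟨hST, Measure.ext fun s hs => ?_⟩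
  rw [Measure.map_apply hST hs, Measure.compProd_apply hs, Measure.compProd_apply (hST hs),
    ← hS.lintegral_comp (Kernel.measurable_kernel_prodMk_left hs)]
  refine lintegral_congr_ae ?_
  filter_upwards [hκ] with a ha
  rw [ha, Measure.map_apply hT (measurable_prodMk_left hs)]
  rfl

end CompProd

section InnerProductSpace

variable {V : Type*} [NormedAddCommGroup V] [InnerProductSpace ℝ V]

/-- The reflection of `V` exchanging `e` and `ω` when these have the same norm: a choice of
isometry carrying `e` to `ω` that depends measurably on `ω`. -/
def householder (e ω : V) : V ≃ₗᵢ[ℝ] V := (ℝ ∙ (e - ω))ᗮ.reflection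

lemma householder_apply_left {e ω : V} (h : ‖ω‖ = ‖e‖) : householder e ω e = ω :=
  Submodule.reflection_sub h.symm

lemma householder_apply_right {e ω : V} (h : ‖ω‖ = ‖e‖) : householder e ω ω = e :=
  (congrArg _ (householder_apply_left h)).symm.trans (Submodule.reflection_reflection _ e)

variable [FiniteDimensional ℝ V] [MeasurableSpace V] [BorelSpace V]

lemma measurable_uncurry_householder (e : V) :
    Measurable fun p : V × V => householder e p.1 p.2 := by
  simp only [householder, Submodule.reflection_orthogonal_apply,
    Submodule.reflection_singleton_apply, two_smul, RCLike.ofReal_real_eq_id, id_eq]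
  fun_prop

instance compactSpace_unitary : CompactSpace (unitary (V →L[ℝ] V)) := by
  refine isCompact_iff_compactSpace.1 (Metric.isCompact_of_isClosed_isBounded isClosed_unitary ?_)
  refine isBounded_iff_forall_norm_le.2 ⟨1, fun Q hQ => ?_⟩
  exact ContinuousLinearMap.opNorm_le_bound _ zero_le_one fun x => by
    rw [one_mul]
    exact (Unitary.norm_map ⟨Q, hQ⟩ x).le

instance continuousSMul_unitary : ContinuousSMul (unitary (V →L[ℝ] V)) V where
  continuous_smul := by
    change Continuous fun p : unitary (V →L[ℝ] V) × V => (p.1 : V →L[ℝ] V) p.2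
    fun_prop

theorem measurePreserving_swap_of_forall_prodMap {μ : Measure (V × V)} [SFinite μ]
    (hμ : ∀ Q : V ≃ₗᵢ[ℝ] V, MeasurePreserving (Prod.map Q Q) μ μ)
    (hnorm : ∀ᵐ p ∂μ, ‖p.1‖ = ‖p.2‖) : MeasurePreserving Prod.swap μ μ := by
  have : SMulInvariantMeasure (unitary (V →L[ℝ] V)) (V × V) μ :=
    ⟨fun Q _ hs => (hμ (Unitary.linearIsometryEquiv Q)).measure_preimage hs.nullMeasurableSet⟩
  refine measurePreserving_of_ae_mem_orbit (Measure.haar : Measure (unitary (V →L[ℝ] V)))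
    measurable_swap (fun _ _ => rfl) ?_
  filter_upwards [hnorm] with p hp
  exact ⟨Unitary.linearIsometryEquiv.symm (householder p.1 p.2),
    Prod.ext (householder_apply_left hp.symm) (householder_apply_right hp.symm)⟩

theorem measurePreserving_swap_compProd {ν : Measure V} [SFinite ν] {κ : Kernel V V}
    [IsSFiniteKernel κ] (hν : ∀ Q : V ≃ₗᵢ[ℝ] V, MeasurePreserving Q ν ν)
    (hκ : ∀ Q : V ≃ₗᵢ[ℝ] V, ∀ᵐ ω ∂ν, κ (Q ω) = (κ ω).map Q)
    (hnorm : ∀ᵐ ω ∂ν, ∀ᵐ x ∂κ ω, ‖x‖ = ‖ω‖) :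
    MeasurePreserving Prod.swap (ν ⊗ₘ κ) (ν ⊗ₘ κ) := by
  refine measurePreserving_swap_of_forall_prodMap (fun Q => ?_) ?_
  · exact measurePreserving_prodMap_compProd (hν Q) Q.continuous.measurable
      (hκ Q)
  · refine Measure.ae_compProd_of_ae_ae ?_ (hnorm.mono fun ω hω => hω.mono fun x hx => hx.symm)
    exact measurableSet_eq_fun measurable_fst.norm measurable_snd.norm

/-- The kernel whose value at `ω` is `σ` transported by an isometry carrying `e` to `ω`. It is
meaningful when `‖ω‖ = ‖e‖` and `σ` is invariant under the isometries fixing `e`. -/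
def transportKernel (e : V) (σ : Measure V) : Kernel V V :=
  (Kernel.id ×ₖ Kernel.const V σ).map fun p => householder e p.1 p.2

instance isFiniteKernel_transportKernel (e : V) (σ : Measure V) [IsFiniteMeasure σ] :
    IsFiniteKernel (transportKernel e σ) := by
  unfold transportKernel
  infer_instance

variable {e ω : V} {σ : Measure V}

section SFinite

variable [SFinite σ]

lemma transportKernel_apply (e ω : V) :
    transportKernel e σ ω = σ.map (householder e ω) := by
  have hmeas := measurable_uncurry_householder e
  rw [transportKernel, Kernel.map_apply _ hmeas, Kernel.prod_apply, Kernel.id_apply,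
    Kernel.const_apply, Measure.dirac_prod, Measure.map_map hmeas measurable_prodMk_left]
  rfl

lemma ae_transportKernel_norm_eq (hσ : ∀ᵐ x ∂σ, ‖x‖ = ‖e‖) :
    ∀ᵐ x ∂transportKernel e σ ω, ‖x‖ = ‖e‖ := by
  rw [transportKernel_apply, ae_map_iff (householder e ω).continuous.aemeasurable
    (measurableSet_eq_fun measurable_norm measurable_const)]
  simpa only [LinearIsometryEquiv.norm_map] using hσ

lemma transportKernel_eq_map (hσ : ∀ P : V ≃ₗᵢ[ℝ] V, P e = e → σ.map P = σ) {P : V ≃ₗᵢ[ℝ] V}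
    (hP : P e = ω) : transportKernel e σ ω = σ.map P := by
  have hω : ‖ω‖ = ‖e‖ := by rw [← hP, P.norm_map]
  have hfix : (P.trans (householder e ω).symm) e = e := by
    rw [LinearIsometryEquiv.trans_apply, hP, LinearIsometryEquiv.symm_apply_eq,
      householder_apply_left hω]
  calc
    transportKernel e σ ω = (σ.map (P.trans (householder e ω).symm)).map (householder e ω) := by
      rw [hσ _ hfix, transportKernel_apply]
    _ = σ.map P := by
      rw [Measure.map_map (LinearIsometryEquiv.continuous _).measurable
        (LinearIsometryEquiv.continuous _).measurable]
      congr 1 with x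
      simp

lemma transportKernel_map (hσ : ∀ P : V ≃ₗᵢ[ℝ] V, P e = e → σ.map P = σ) (hω : ‖ω‖ = ‖e‖)
    (Q : V ≃ₗᵢ[ℝ] V) : transportKernel e σ (Q ω) = (transportKernel e σ ω).map Q := by
  rw [transportKernel_apply e ω, Measure.map_map Q.continuous.measurable
    (householder e ω).continuous.measurable]
  exact transportKernel_eq_map hσ (P := (householder e ω).trans Q)
    (congrArg Q (householder_apply_left hω))

end SFinite

theorem measurePreserving_swap_compProd_transportKernel [IsFiniteMeasure σ] {ν : Measure V}
    [SFinite ν] (hν : ∀ Q : V ≃ₗᵢ[ℝ] V, MeasurePreserving Q ν ν) (hν_norm : ∀ᵐ ω ∂ν, ‖ω‖ = ‖e‖)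
    (hσ : ∀ P : V ≃ₗᵢ[ℝ] V, P e = e → σ.map P = σ) (hσ_norm : ∀ᵐ x ∂σ, ‖x‖ = ‖e‖) :
    MeasurePreserving Prod.swap (ν ⊗ₘ transportKernel e σ) (ν ⊗ₘ transportKernel e σ) := by
  refine measurePreserving_swap_compProd hν ?_ ?_
  · exact fun Q => hν_norm.mono fun ω hω => transportKernel_map hσ hω Q
  · exact hν_norm.mono fun ω hω => (ae_transportKernel_norm_eq hσ_norm).mono
      fun x hx => hx.trans hω.symm

end InnerProductSpace

section ToSphere

open scoped Pointwise

variable {E : Type*} [NormedAddCommGroup E] [NormedSpace ℝ E] [MeasurableSpace E] [BorelSpace E]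

lemma map_val_toSphere_apply (μ : Measure E) {s : Set E} (hs : MeasurableSet s) :
    μ.toSphere.map Subtype.val s =
      Module.finrank ℝ E * μ (Ioo (0 : ℝ) 1 • (sphere (0 : E) 1 ∩ s)) := by
  rw [Measure.map_apply measurable_subtype_coe hs,
    μ.toSphere_apply' (measurable_subtype_coe hs), Subtype.image_preimage_coe]

theorem measurePreserving_map_val_toSphere {μ : Measure E} (Q : E ≃ₗᵢ[ℝ] E)
    (hQ : MeasurePreserving Q μ μ) :
    MeasurePreserving Q (μ.toSphere.map Subtype.val) (μ.toSphere.map Subtype.val) := by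
  have hQm : Measurable Q := Q.continuous.measurable
  refine ⟨hQm, Measure.ext fun s hs => ?_⟩
  have hcone : Q ⁻¹' (Ioo (0 : ℝ) 1 • (sphere 0 1 ∩ s)) =
      Ioo (0 : ℝ) 1 • (sphere 0 1 ∩ Q ⁻¹' s) := by
    ext x
    simp only [mem_preimage, Set.mem_smul]
    refine exists_congr fun r => and_congr_right fun _ => ?_
    rw [Q.surjective.exists]
    simp only [mem_preimage, mem_inter_iff, mem_sphere_zero_iff_norm, Q.norm_map, ← map_smul,
      Q.injective.eq_iff]
  rw [Measure.map_apply hQm hs, map_val_toSphere_apply μ hs, map_val_toSphere_apply μ (hQm hs),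
    ← hcone, hQ.measure_preimage_emb Q.toHomeomorph.measurableEmbedding]

end ToSphere

section Circle

local instance fact_two_pi_pos : Fact (0 < 2 * π) := ⟨Real.two_pi_pos⟩

lemma exists_measurePreserving_comp_toCircle (Q : ℂ ≃ₗᵢ[ℝ] ℂ) :
    ∃ φ : AddCircle (2 * π) → AddCircle (2 * π), MeasurePreserving φ volume volume ∧
      ∀ θ, Q (AddCircle.toCircle θ) = AddCircle.toCircle (φ θ) := by
  obtain ⟨a, ha⟩ := linear_isometry_complex Q
  obtain ⟨α, rfl⟩ := (AddCircle.homeomorphCircle Real.two_pi_pos.ne').surjective a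
  rw [AddCircle.homeomorphCircle_apply] at ha
  obtain rfl | rfl := ha
  · refine ⟨(α + ·), measurePreserving_add_left _ α, fun θ => ?_⟩
    simp [AddCircle.toCircle_add]
  · refine ⟨fun θ => α + -θ,
      (measurePreserving_add_left _ α).comp (Measure.measurePreserving_neg volume), fun θ => ?_⟩
    simp [AddCircle.toCircle_add, AddCircle.toCircle_neg, ← Circle.coe_inv_eq_conj]

lemma norm_e₃ : ‖e₃‖ = 1 := by simp [e₃]

lemma inner_e₃ (v : E3) : inner ℝ e₃ v = v 2 := by
  simp [e₃, PiLp.inner_apply]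

/-- The plane `e₃ᗮ` as an isometric copy of `ℂ` in `ℝ³`. -/
def horizontalPlane : ℂ →ₗᵢ[ℝ] E3 where
  toFun z := vec3 z.re z.im 0
  map_add' z w := by
    ext i
    fin_cases i <;> simp [vec3]
  map_smul' c z := by
    ext i
    fin_cases i <;> simp [vec3]
  norm_map' z := by
    simp [EuclideanSpace.norm_eq, Fin.sum_univ_three, vec3, Complex.norm_eq_sqrt_sq_add_sq]

lemma horizontalPlane_apply (z : ℂ) : horizontalPlane z = vec3 z.re z.im 0 := rfl

lemma inner_e₃_horizontalPlane (z : ℂ) : inner ℝ e₃ (horizontalPlane z) = 0 := by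
  simp [horizontalPlane_apply, inner_e₃, vec3]

lemma horizontalPlane_of_inner_e₃_eq_zero {v : E3} (hv : inner ℝ e₃ v = 0) :
    horizontalPlane ⟨v 0, v 1⟩ = v := by
  rw [inner_e₃] at hv
  ext i
  fin_cases i <;> simp [horizontalPlane_apply, vec3, hv]

lemma exists_comp_horizontalPlane {P : E3 ≃ₗᵢ[ℝ] E3} (hP : P e₃ = e₃) :
    ∃ Q : ℂ ≃ₗᵢ[ℝ] ℂ, ∀ z, P (horizontalPlane z) = horizontalPlane (Q z) := by
  have hperp (z : ℂ) : inner ℝ e₃ (P (horizontalPlane z)) = 0 := by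
    rw [← inner_e₃_horizontalPlane z, ← P.inner_map_map e₃ (horizontalPlane z), hP]
  have hlift (z : ℂ) := horizontalPlane_of_inner_e₃_eq_zero (hperp z)
  let Q : ℂ →ₗᵢ[ℝ] ℂ :=
    { toFun z := ⟨P (horizontalPlane z) 0, P (horizontalPlane z) 1⟩
      map_add' z w := by simp only [map_add]; rfl
      map_smul' c z := by
        simp only [map_smul, RingHom.id_apply]
        exact Complex.ext (by simp) (by simp)
      norm_map' z := by
        simp_rw [← horizontalPlane.norm_map, ← P.norm_map (horizontalPlane z)]
        exact congrArg _ (hlift z) }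
  exact ⟨Q.toLinearIsometryEquiv rfl, fun z => (hlift z).symm⟩

/-- The horizontal circle at height `t`, parametrized by angles modulo `2π`. -/
def horizontalCircle (t : ℝ) (θ : AddCircle (2 * π)) : E3 :=
  horizontalPlane (√(1 - t ^ 2) • (AddCircle.toCircle θ : ℂ)) + t • e₃

lemma continuous_horizontalCircle (t : ℝ) : Continuous (horizontalCircle t) := by
  have := AddCircle.continuous_toCircle (T := 2 * π)
  unfold horizontalCircle
  fun_prop

lemma horizontalCircle_coe (t s : ℝ) : horizontalCircle t (s : AddCircle (2 * π)) = gcirc t s := by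
  have hs : AddCircle.toCircle (s : AddCircle (2 * π)) = Circle.exp s := by
    rw [AddCircle.toCircle_apply_mk, div_self Real.two_pi_pos.ne', one_mul]
  rw [horizontalCircle, hs]
  ext i
  fin_cases i <;> simp [gcirc, horizontalPlane_apply, vec3, e₃, Circle.coe_exp,
    Complex.exp_ofReal_mul_I_re, Complex.exp_ofReal_mul_I_im]

lemma continuous_gcirc (t : ℝ) : Continuous (gcirc t) := by
  have h : gcirc t = fun s : ℝ => horizontalCircle t (s : AddCircle (2 * π)) :=
    funext fun s => (horizontalCircle_coe t s).symm
  rw [h]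
  exact (continuous_horizontalCircle t).comp (AddCircle.continuous_mk' _)

lemma norm_horizontalCircle {t : ℝ} (ht : t ∈ Icc (-1) 1) (θ : AddCircle (2 * π)) :
    ‖horizontalCircle t θ‖ = 1 := by
  have ht' : 0 ≤ 1 - t ^ 2 := by nlinarith [ht.1, ht.2]
  have hperp (z : ℂ) : inner ℝ (horizontalPlane z) (t • e₃) = 0 := by
    rw [real_inner_smul_right, real_inner_comm, inner_e₃_horizontalPlane, mul_zero]
  rw [← pow_eq_one_iff_of_nonneg (norm_nonneg _) two_ne_zero, pow_two, horizontalCircle,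
    norm_add_sq_eq_norm_sq_add_norm_sq_real (hperp _), horizontalPlane.norm_map, norm_smul,
    norm_smul, norm_e₃, Circle.norm_coe, mul_one, mul_one, Real.norm_eq_abs, Real.norm_eq_abs,
    abs_mul_abs_self, abs_mul_abs_self, Real.mul_self_sqrt ht']
  ring

lemma exists_measurePreserving_comp_horizontalCircle {P : E3 ≃ₗᵢ[ℝ] E3} (hP : P e₃ = e₃) (t : ℝ) :
    ∃ φ : AddCircle (2 * π) → AddCircle (2 * π), MeasurePreserving φ volume volume ∧
      P ∘ horizontalCircle t = horizontalCircle t ∘ φ := by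
  obtain ⟨Q, hQ⟩ := exists_comp_horizontalPlane hP
  obtain ⟨φ, hφ, hQφ⟩ := exists_measurePreserving_comp_toCircle Q
  refine ⟨φ, hφ, funext fun θ => ?_⟩
  simp only [Function.comp_apply, horizontalCircle, map_add, map_smul, hP, hQ, hQφ]

/-- The angular measure, of total mass `2π`, on the horizontal circle at height `t`. -/
def circleMeasure (t : ℝ) : Measure E3 := volume.map (horizontalCircle t)

instance isFiniteMeasure_circleMeasure (t : ℝ) : IsFiniteMeasure (circleMeasure t) := by
  unfold circleMeasure
  infer_instance

lemma circleMeasure_eq_map_gcirc (t : ℝ) :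
    circleMeasure t = (volume.restrict (Ioc 0 (2 * π))).map (gcirc t) := by
  have hmk := AddCircle.measurePreserving_mk (2 * π) 0
  rw [zero_add] at hmk
  rw [circleMeasure, ← hmk.map_eq,
    Measure.map_map (continuous_horizontalCircle t).measurable hmk.measurable]
  congr 1 with s : 1
  exact horizontalCircle_coe t s

lemma map_circleMeasure {P : E3 ≃ₗᵢ[ℝ] E3} (hP : P e₃ = e₃) (t : ℝ) :
    (circleMeasure t).map P = circleMeasure t := by
  have hmeas := (continuous_horizontalCircle t).measurable
  obtain ⟨φ, hφ, hPφ⟩ := exists_measurePreserving_comp_horizontalCircle hP t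
  rw [circleMeasure, Measure.map_map P.continuous.measurable hmeas, hPφ,
    ← Measure.map_map hmeas hφ.measurable, hφ.map_eq]

lemma ae_circleMeasure_norm_eq_one {t : ℝ} (ht : t ∈ Icc (-1) 1) :
    ∀ᵐ x ∂circleMeasure t, ‖x‖ = 1 := by
  rw [circleMeasure, ae_map_iff (continuous_horizontalCircle t).aemeasurable
    (measurableSet_eq_fun measurable_norm measurable_const)]
  exact Eventually.of_forall (norm_horizontalCircle ht)

end Circle

section Sphere

lemma measurePreserving_nuS (Q : E3 ≃ₗᵢ[ℝ] E3) : MeasurePreserving Q nuS nuS :=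
  measurePreserving_map_val_toSphere Q Q.measurePreserving

instance isFiniteMeasure_nuS : IsFiniteMeasure nuS := by
  unfold nuS
  infer_instance

lemma ae_nuS_norm_eq_one : ∀ᵐ ω ∂nuS, ‖ω‖ = 1 := by
  rw [nuS, ae_map_iff measurable_subtype_coe.aemeasurable
    (measurableSet_eq_fun measurable_norm measurable_const)]
  exact Eventually.of_forall norm_eq_of_mem_sphere

/-- The kernel sending a unit vector `ω` to the angular measure, of total mass `2π`, on the circle
`Γ_t^ω = {x ∈ S : ω·x = t}`. -/
def circleKernel (t : ℝ) : Kernel E3 E3 := transportKernel e₃ (circleMeasure t)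

instance isFiniteKernel_circleKernel (t : ℝ) : IsFiniteKernel (circleKernel t) := by
  unfold circleKernel
  infer_instance

theorem measurePreserving_swap_nuS_compProd_circleKernel {t : ℝ} (ht : t ∈ Icc (-1) 1) :
    MeasurePreserving Prod.swap (nuS ⊗ₘ circleKernel t) (nuS ⊗ₘ circleKernel t) :=
  measurePreserving_swap_compProd_transportKernel measurePreserving_nuS
    (norm_e₃.symm ▸ ae_nuS_norm_eq_one) (fun _ hP => map_circleMeasure hP t)
    (norm_e₃.symm ▸ ae_circleMeasure_norm_eq_one ht)

lemma ae_mem_sphere_prod_sphere {t : ℝ} (ht : t ∈ Icc (-1) 1) :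
    ∀ᵐ p ∂nuS ⊗ₘ circleKernel t, p ∈ sphere (0 : E3) 1 ×ˢ sphere (0 : E3) 1 := by
  refine Measure.ae_compProd_of_ae_ae
    (isClosed_sphere.measurableSet.prod isClosed_sphere.measurableSet) ?_
  filter_upwards [ae_nuS_norm_eq_one] with ω hω
  have h := ae_transportKernel_norm_eq (ω := ω) (norm_e₃.symm ▸ ae_circleMeasure_norm_eq_one ht)
  rw [norm_e₃] at h
  filter_upwards [h] with x hx
  exact ⟨mem_sphere_zero_iff_norm.2 hω, mem_sphere_zero_iff_norm.2 hx⟩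

variable {F : Type*} [NormedAddCommGroup F]

lemma integrable_nuS_compProd_circleKernel_of_continuousOn {t : ℝ} (ht : t ∈ Icc (-1) 1)
    {f : E3 × E3 → F} (hf : ContinuousOn f (sphere 0 1 ×ˢ sphere 0 1)) :
    Integrable f (nuS ⊗ₘ circleKernel t) := by
  rw [← Measure.restrict_eq_self_of_ae_mem (ae_mem_sphere_prod_sphere ht)]
  exact hf.integrableOn_compact ((isCompact_sphere 0 1).prod (isCompact_sphere 0 1))

variable [NormedSpace ℝ F]

lemma integral_circleKernel {t : ℝ} {ω : E3} {P : E3 ≃ₗᵢ[ℝ] E3} (hP : P e₃ = ω) {f : E3 → F}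
    (hf : AEStronglyMeasurable f (circleKernel t ω)) :
    ∫ x, f x ∂circleKernel t ω = ∫ s in (0 : ℝ)..(2 * π), f (P (gcirc t s)) := by
  have hmap : circleKernel t ω = (volume.restrict (Ioc 0 (2 * π))).map (P ∘ gcirc t) := by
    rw [circleKernel, transportKernel_eq_map (fun _ hQ => map_circleMeasure hQ t) hP,
      circleMeasure_eq_map_gcirc, Measure.map_map P.continuous.measurable
      (continuous_gcirc t).measurable]
  rw [hmap] at hf ⊢
  rw [integral_map (P.continuous.comp (continuous_gcirc t)).aemeasurable hf,
    intervalIntegral.integral_of_le Real.two_pi_pos.le]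
  rfl

lemma integral_nuS_compProd_circleKernel {R : E3 → (E3 ≃ₗᵢ[ℝ] E3)}
    (hR : ∀ ω : E3, ‖ω‖ = 1 → R ω e₃ = ω) {t : ℝ} {f : E3 × E3 → F}
    (hf : Integrable f (nuS ⊗ₘ circleKernel t)) :
    ∫ p, f p ∂nuS ⊗ₘ circleKernel t =
      ∫ ω, (∫ s in (0 : ℝ)..(2 * π), f (ω, R ω (gcirc t s))) ∂nuS := by
  rw [Measure.integral_compProd hf]
  refine integral_congr_ae ?_
  filter_upwards [ae_nuS_norm_eq_one,
    ((Measure.integrable_compProd_iff hf.aestronglyMeasurable).1 hf).1] with ω hω hfω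
  exact integral_circleKernel (hR ω hω) hfω.aestronglyMeasurable

theorem stmt8_general (f : E3 → E3 → F) {t : ℝ} (ht : t ∈ Icc (-1) 1)
    (hf : Integrable (fun p : E3 × E3 => f p.1 p.2) (nuS ⊗ₘ circleKernel t))
    (R : E3 → (E3 ≃ₗᵢ[ℝ] E3)) (hR : ∀ ω : E3, ‖ω‖ = 1 → R ω e₃ = ω) :
    ∫ ω, (∫ s in (0:ℝ)..(2 * π), f ω (R ω (gcirc t s))) ∂nuS
      = ∫ ω', (∫ s in (0:ℝ)..(2 * π), f (R ω' (gcirc t s)) ω') ∂nuS := by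
  have hswap := measurePreserving_swap_nuS_compProd_circleKernel ht
  calc
    _ = ∫ p, f p.1 p.2 ∂nuS ⊗ₘ circleKernel t := (integral_nuS_compProd_circleKernel hR hf).symm
    _ = ∫ p, f p.swap.1 p.swap.2 ∂nuS ⊗ₘ circleKernel t :=
      (hswap.integral_comp MeasurableEquiv.prodComm.measurableEmbedding _).symm
    _ = _ := integral_nuS_compProd_circleKernel hR (hswap.integrable_comp_of_integrable hf)

end Sphere

/-- for `f ∈ C(S×S)`, `−1 < t < 1`, and any measurable choice
`ω ↦ R(ω)` of orthogonal maps with `R(ω)e₃ = ω`,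
`∫_S ∫_0^{2π} f(ω, R(ω)g_t(s)) ds dω = ∫_S ∫_0^{2π} f(R(ω')g_t(s), ω') ds dω'`,
i.e. `∫_S ∫_{Γ_t^ω} f(ω,ω') dℓ(ω') dω = ∫_S ∫_{Γ_t^{ω'}} f(ω,ω') dℓ(ω) dω'`. -/
theorem stmt8 (f : E3 → E3 → ℝ)
    (hf : ContinuousOn (fun p : E3 × E3 => f p.1 p.2)
      (sphere (0 : E3) 1 ×ˢ sphere (0 : E3) 1))
    (t : ℝ) (ht₁ : -1 < t) (ht₂ : t < 1)
    (R : E3 → (E3 ≃ₗᵢ[ℝ] E3))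
    (hR : ∀ ω : E3, ‖ω‖ = 1 → R ω e₃ = ω)
    (hRmeas : ∀ v : E3, Measurable fun ω => R ω v) :
    ∫ ω, (∫ s in (0:ℝ)..(2 * π), f ω (R ω (gcirc t s))) ∂nuS
      = ∫ ω', (∫ s in (0:ℝ)..(2 * π), f (R ω' (gcirc t s)) ω') ∂nuS :=
  stmt8_general f ⟨ht₁.le, ht₂.le⟩
    (integrable_nuS_compProd_circleKernel_of_continuousOn ⟨ht₁.le, ht₂.le⟩ hf) R hR
end
end
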